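/- Let G be an infinite, connected, locally finite, vertex-transitive simple graph with vertex set V, and let Ḡ be a locally finite simple graph on the same vertex set V such that every edge of G is an edge of Ḡ and Ḡ has at least one edge not in G. Let Γ be a subgroup of Aut(G) acting transitively on V, and let 𝒜 be a subgroup of Γ having the finite coset property relative to Γ, such that every element of 𝒜 is also an automorphism of Ḡ. Let σ̄_n(v) denote the number of n-step SAWs in Ḡ from v. If σ_n(v)^{1/n} → μ as n → ∞ for a vertex v, then μ < liminf_{n→∞} σ̄_n(v)^{1/n}. -/

import Mathlib

open Filter

/-- The number of `n`-step self-avoiding walks in `G` starting at `v`. -/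
noncomputable def sawCount {V : Type*} (G : SimpleGraph V) (v : V) (n : ℕ) : ℕ :=
  Nat.card {p : Σ w : V, G.Walk v w // p.2.IsPath ∧ p.2.length = n}

/-- The subgroup `A` of the permutation group `Γ` of the vertex set `V` has the finite
coset property relative to `Γ` with root `ρ` if there exist `ν₀ = 1, ν₁, …, ν_s ∈ Γ`
such that the sets `νᵢ A ρ`, `0 ≤ i ≤ s`, partition `V` (each vertex lies in exactly one). -/
def FiniteCosetProperty {V : Type*} (Γ A : Subgroup (Equiv.Perm V)) (ρ : V) : Prop :=
  ∃ (s : ℕ) (ν : Fin (s + 1) → Equiv.Perm V),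
    (∀ i, ν i ∈ Γ) ∧ ν 0 = 1 ∧
    ∀ v : V, ∃! i : Fin (s + 1), ∃ α ∈ A, (ν i) (α ρ) = v

namespace Aug
open Classical

def IsSaw {V : Type*} (H : SimpleGraph V) (x : V) (l : List V) : Prop :=
  (x :: l).IsChain H.Adj ∧ (x :: l).Nodup

def LF {V : Type*} (H : SimpleGraph V) : Prop := ∀ v : V, (H.neighborSet v).Finite

theorem chain_app {V : Type*} (R : V → V → Prop) (x : V) (l1 l2 : List V) :
    (x :: (l1 ++ l2)).IsChain R ↔ (x :: l1).IsChain R ∧ (l1.getLastD x :: l2).IsChain R := by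
  induction l1 generalizing x with
  | nil => simp
  | cons a l ih =>
    rw [List.cons_append, List.isChain_cons_cons, List.isChain_cons_cons, ih, List.getLastD_cons]
    tauto

theorem getLastD_mem {V : Type*} (x : V) (l : List V) : l.getLastD x ∈ x :: l := by
  induction l generalizing x with
  | nil => simp
  | cons a l ih => rw [List.getLastD_cons]; exact List.mem_cons_of_mem _ (ih a)

theorem getLastD_app {V : Type*} (x : V) (l1 l2 : List V) :
    (l1 ++ l2).getLastD x = l2.getLastD (l1.getLastD x) := by
  induction l1 generalizing x with
  | nil => simp
  | cons a l ih => rw [List.cons_append, List.getLastD_cons, List.getLastD_cons, ih]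

theorem getLastD_map {V W : Type*} (f : V → W) (x : V) (l : List V) :
    (l.map f).getLastD (f x) = f (l.getLastD x) := by
  induction l generalizing x with
  | nil => simp
  | cons a l ih => rw [List.map_cons, List.getLastD_cons, List.getLastD_cons, ih]

theorem getLastD_mem' {V : Type*} (x : V) (l : List V) (h : l ≠ []) : l.getLastD x ∈ l := by
  cases l with
  | nil => exact absurd rfl h
  | cons a l => rw [List.getLastD_cons]; exact getLastD_mem a l

theorem saw_app {V : Type*} {H : SimpleGraph V} {x : V} {l1 l2 : List V} :
    IsSaw H x (l1 ++ l2) ↔ IsSaw H x l1 ∧ IsSaw H (l1.getLastD x) l2 ∧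
      ∀ t ∈ x :: l1, t ∉ l2 := by
  unfold IsSaw
  rw [chain_app, ← List.cons_append, List.nodup_append']
  constructor
  · rintro ⟨⟨h1, h2⟩, h3, h4, h5⟩
    exact ⟨⟨h1, h3⟩, ⟨h2, List.nodup_cons.2 ⟨h5 (getLastD_mem x l1), h4⟩⟩, fun t ht => h5 ht⟩
  · rintro ⟨⟨h1, h3⟩, ⟨h2, h4⟩, h5⟩
    exact ⟨⟨h1, h2⟩, h3, (List.nodup_cons.1 h4).2, fun t ht => h5 t ht⟩

theorem saw_cons {V : Type*} {H : SimpleGraph V} {x y : V} {l : List V} :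
    IsSaw H x (y :: l) ↔ H.Adj x y ∧ IsSaw H y l ∧ x ∉ y :: l := by
  unfold IsSaw
  rw [List.isChain_cons_cons, List.nodup_cons (a := x)]
  tauto

theorem saw_nil {V : Type*} {H : SimpleGraph V} {x : V} : IsSaw H x [] := by
  simp [IsSaw]

theorem SS_finite {V : Type*} {H : SimpleGraph V} (hH : LF H) (x : V) (n : ℕ) :
    {l | IsSaw H x l ∧ l.length = n}.Finite := by
  induction n generalizing x with
  | zero =>
    apply (Set.finite_singleton []).subset
    rintro l ⟨_, h⟩
    simpa using h
  | succ n ih =>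
    apply ((hH x).biUnion (fun y _ => (ih y).image (List.cons y))).subset
    rintro l ⟨h1, h2⟩
    cases l with
    | nil => simp at h2
    | cons y l =>
      rw [saw_cons] at h1
      simp only [Set.mem_iUnion]
      exact ⟨y, h1.1, l, ⟨h1.2.1, by simpa using h2⟩, rfl⟩

noncomputable def SF {V : Type*} {H : SimpleGraph V} (hH : LF H) (x : V) (n : ℕ) :
    Finset (List V) := (SS_finite hH x n).toFinset

theorem mem_SF {V : Type*} {H : SimpleGraph V} {hH : LF H} {x : V} {n : ℕ} {l : List V} :
    l ∈ SF hH x n ↔ IsSaw H x l ∧ l.length = n := by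
  simp [SF]

theorem saw_take {V : Type*} {H : SimpleGraph V} {x : V} {l : List V} (h : IsSaw H x l) (m : ℕ) :
    IsSaw H x (l.take m) ∧ IsSaw H ((l.take m).getLastD x) (l.drop m) ∧
      ∀ t ∈ x :: l.take m, t ∉ l.drop m := by
  rw [← List.take_append_drop m l, saw_app] at h
  exact h

theorem walk_of_chain {V : Type*} {H : SimpleGraph V} (x : V) (l : List V)
    (h : (x :: l).IsChain H.Adj) : ∃ p : H.Walk x (l.getLastD x), p.support = x :: l := by
  induction l generalizing x with
  | nil => exact ⟨SimpleGraph.Walk.nil, rfl⟩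
  | cons a l ih =>
    rw [List.isChain_cons_cons] at h
    obtain ⟨p, hp⟩ := ih a h.2
    rw [List.getLastD_cons]
    exact ⟨SimpleGraph.Walk.cons h.1 p, by simp [hp]⟩

theorem sawCount_eq {V : Type*} {H : SimpleGraph V} (hH : LF H) (x : V) (n : ℕ) :
    sawCount H x n = (SF hH x n).card := by
  unfold sawCount
  rw [← Nat.card_eq_finsetCard]
  refine Nat.card_congr (Equiv.ofBijective (fun p => ⟨p.1.2.support.tail, ?_⟩) ⟨?_, ?_⟩)
  · obtain ⟨⟨w, p⟩, hp, hn⟩ := p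
    rw [mem_SF]
    refine ⟨⟨?_, ?_⟩, ?_⟩
    · rw [SimpleGraph.Walk.cons_tail_support]; exact p.isChain_adj_support
    · rw [SimpleGraph.Walk.cons_tail_support]; exact hp.support_nodup
    · simpa using hn
  · rintro ⟨⟨w, p⟩, hp, hn⟩ ⟨⟨w', p'⟩, hp', hn'⟩ h
    simp only [Subtype.mk.injEq] at h
    have hs : p.support = p'.support := by
      rw [← SimpleGraph.Walk.cons_tail_support p, ← SimpleGraph.Walk.cons_tail_support p', h]
    have hw : w = w' := by
      have h1 := SimpleGraph.Walk.getLast_support p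
      have h2 := SimpleGraph.Walk.getLast_support p'
      rw [← h1, ← h2]
      congr 1
    subst hw
    have := SimpleGraph.Walk.ext_support hs
    subst this
    rfl
  · rintro ⟨l, hl⟩
    rw [mem_SF] at hl
    obtain ⟨⟨h1, h2⟩, h3⟩ := hl
    obtain ⟨p, hp⟩ := walk_of_chain x l h1
    refine ⟨⟨⟨_, p⟩, ?_, ?_⟩, ?_⟩
    · rw [SimpleGraph.Walk.isPath_def]; exact hp ▸ h2
    · have := congrArg List.length hp
      simp only [SimpleGraph.Walk.length_support, List.length_cons] at this
      show p.length = n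
      omega
    · simp [hp]

end Aug

namespace Aug
open Classical

theorem saw_map {V : Type*} {G : SimpleGraph V} (γ : G ≃g G) (x : V) (l : List V) :
    IsSaw G (γ x) (l.map γ) ↔ IsSaw G x l := by
  unfold IsSaw
  rw [← List.map_cons (f := γ), List.isChain_map, List.nodup_map_iff γ.injective]
  simp only [SimpleGraph.Iso.map_adj_iff]

theorem card_iso {V : Type*} {G : SimpleGraph V} (hG : LF G) (γ : G ≃g G) (x : V) (n : ℕ)
    (P Q : List V → Prop) [DecidablePred P] [DecidablePred Q] (hPQ : ∀ l, P l ↔ Q (l.map γ)) :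
    ((SF hG x n).filter P).card = ((SF hG (γ x) n).filter Q).card := by
  apply Finset.card_bij (fun l _ => l.map γ)
  · intro l hl
    rw [Finset.mem_filter, mem_SF] at hl ⊢
    exact ⟨⟨(saw_map γ x l).2 hl.1.1, by simpa using hl.1.2⟩, (hPQ l).1 hl.2⟩
  · intro a _ b _ h
    exact List.map_injective_iff.2 γ.injective h
  · intro l hl
    rw [Finset.mem_filter, mem_SF] at hl
    have e : (l.map γ.symm).map γ = l := by
      simp [List.map_map, Function.comp_def]
    refine ⟨l.map γ.symm, ?_, e⟩
    rw [Finset.mem_filter, mem_SF, hPQ, ← saw_map γ, e]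
    simpa using hl

theorem sg_const {V : Type*} {G : SimpleGraph V} (hG : LF G)
    (hvt : ∀ u w : V, ∃ γ : G ≃g G, γ u = w) (x y : V) (n : ℕ) :
    (SF hG x n).card = (SF hG y n).card := by
  obtain ⟨γ, rfl⟩ := hvt x y
  have := card_iso hG γ x n (fun _ => True) (fun _ => True) (by simp)
  simpa using this

theorem sg_add {V : Type*} {H : SimpleGraph V} (hH : LF H) (x : V) (m n s : ℕ)
    (hs : ∀ y, (SF hH y n).card ≤ s) :
    (SF hH x (m + n)).card ≤ s * (SF hH x m).card := by
  apply Finset.card_le_mul_card_image_of_maps_to (f := fun l => l.take m)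
  · intro l hl
    rw [mem_SF] at hl ⊢
    exact ⟨(saw_take hl.1 m).1, by simp [hl.2]⟩
  · intro p hp
    refine le_trans ?_ (hs (p.getLastD x))
    apply Finset.card_le_card_of_injOn (fun l => l.drop m)
    · intro l hl
      simp only [Finset.coe_filter, Set.mem_ofPred_eq, mem_SF] at hl
      obtain ⟨⟨h1, h2⟩, rfl⟩ := hl
      simp only [Finset.mem_coe]
      rw [mem_SF]
      exact ⟨(saw_take h1 m).2.1, by simp [h2]⟩
    · intro a ha b hb h
      simp only [Finset.coe_filter, Set.mem_ofPred_eq] at ha hb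
      rw [← List.take_append_drop m a, ← List.take_append_drop m b, ha.2, hb.2]
      simp only at h
      rw [h]

def near {V : Type*} (G : SimpleGraph V) (r : ℕ) (x y : V) : Prop :=
  ∃ p : G.Walk x y, p.length ≤ r

theorem near_refl {V : Type*} {G : SimpleGraph V} (r : ℕ) (x : V) : near G r x x :=
  ⟨SimpleGraph.Walk.nil, by simp⟩

theorem near_symm {V : Type*} {G : SimpleGraph V} {r : ℕ} {x y : V} (h : near G r x y) :
    near G r y x := by
  obtain ⟨p, hp⟩ := h
  exact ⟨p.reverse, by simpa using hp⟩

theorem near_trans {V : Type*} {G : SimpleGraph V} {r s : ℕ} {x y z : V} (h : near G r x y)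
    (h' : near G s y z) : near G (r + s) x z := by
  obtain ⟨p, hp⟩ := h
  obtain ⟨q, hq⟩ := h'
  exact ⟨p.append q, by rw [SimpleGraph.Walk.length_append]; omega⟩

theorem near_mono {V : Type*} {G : SimpleGraph V} {r s : ℕ} (hrs : r ≤ s) {x y : V}
    (h : near G r x y) : near G s x y := by
  obtain ⟨p, hp⟩ := h
  exact ⟨p, hp.trans hrs⟩

theorem near_adj {V : Type*} {G : SimpleGraph V} {x y : V} (h : G.Adj x y) : near G 1 x y :=
  ⟨SimpleGraph.Walk.cons h SimpleGraph.Walk.nil, by simp⟩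

theorem near_map {V : Type*} {G : SimpleGraph V} (γ : G ≃g G) {r : ℕ} {x y : V} :
    near G r (γ x) (γ y) ↔ near G r x y := by
  constructor
  · rintro ⟨p, hp⟩
    have h : near G r (γ.symm (γ x)) (γ.symm (γ y)) :=
      ⟨p.map γ.symm.toHom, by rw [SimpleGraph.Walk.length_map]; exact hp⟩
    simpa using h
  · rintro ⟨p, hp⟩
    exact ⟨p.map γ.toHom, by rw [SimpleGraph.Walk.length_map]; exact hp⟩

theorem near_exists {V : Type*} {G : SimpleGraph V} (hc : G.Connected) (x y : V) :
    ∃ r, near G r x y := by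
  obtain ⟨p⟩ := hc.preconnected x y
  exact ⟨p.length, p, le_rfl⟩

theorem ball_finite {V : Type*} {G : SimpleGraph V} (hG : LF G) (r : ℕ) (x : V) :
    {y | near G r x y}.Finite := by
  induction r generalizing x with
  | zero =>
    apply (Set.finite_singleton x).subset
    rintro y ⟨p, hp⟩
    have : x = y := SimpleGraph.Walk.eq_of_length_eq_zero (p := p) (by omega)
    simp [this]
  | succ r ih =>
    apply ((Set.finite_singleton x).union ((hG x).biUnion (fun y _ => ih y))).subset
    rintro y ⟨p, hp⟩
    cases p with
    | nil => left; simp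
    | cons h q =>
      right
      simp only [Set.mem_iUnion]
      exact ⟨_, h, q, by simpa using hp⟩

noncomputable def BF {V : Type*} {G : SimpleGraph V} (hG : LF G) (r : ℕ) (x : V) : Finset V :=
  (ball_finite hG r x).toFinset

theorem mem_BF {V : Type*} {G : SimpleGraph V} {hG : LF G} {r : ℕ} {x y : V} :
    y ∈ BF hG r x ↔ near G r x y := by simp [BF]

theorem BF_const {V : Type*} {G : SimpleGraph V} (hG : LF G)
    (hvt : ∀ u w : V, ∃ γ : G ≃g G, γ u = w) (r : ℕ) (x y : V) :
    (BF hG r x).card = (BF hG r y).card := by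
  obtain ⟨γ, rfl⟩ := hvt x y
  apply Finset.card_bij (fun l _ => γ l)
  · intro a ha; rw [mem_BF] at *; exact (near_map γ).2 ha
  · intro a _ b _ h; exact γ.injective h
  · intro b hb
    refine ⟨γ.symm b, ?_, by simp⟩
    rw [mem_BF] at *
    rw [← near_map γ]; simpa using hb

theorem chain_near {V : Type*} {G : SimpleGraph V} {x : V} {l : List V}
    (h : (x :: l).IsChain G.Adj) {t : V} (ht : t ∈ x :: l) : near G l.length x t := by
  induction l generalizing x with
  | nil => simp at ht; subst ht; exact near_refl _ _
  | cons a l ih =>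
    rw [List.isChain_cons_cons] at h
    rcases List.mem_cons.1 ht with rfl | ht
    · exact near_refl _ _
    · have := near_trans (near_adj h.1) (ih h.2 ht)
      exact near_mono (by simp; omega) this

theorem saw_of_path {V : Type*} {G : SimpleGraph V} {x y : V} (p : G.Walk x y) (hp : p.IsPath) :
    IsSaw G x p.support.tail ∧ p.support.tail.getLastD x = y ∧
      p.support.tail.length = p.length := by
  refine ⟨⟨?_, ?_⟩, ?_, by simp⟩
  · rw [SimpleGraph.Walk.cons_tail_support]; exact p.isChain_adj_support
  · rw [SimpleGraph.Walk.cons_tail_support]; exact hp.support_nodup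
  · have key : ∀ {x y : V} (p : G.Walk x y), p.support.tail.getLastD x = y := by
      intro x y p
      induction p with
      | nil => simp
      | cons h q ih =>
        rw [SimpleGraph.Walk.support_cons, List.tail_cons, ← SimpleGraph.Walk.cons_tail_support q,
          List.getLastD_cons, ih]
    exact key p

/-- a path as a list -/
theorem exists_saw {V : Type*} {G : SimpleGraph V} {x y : V} (h : G.Reachable x y) :
    ∃ l, IsSaw G x l ∧ l.getLastD x = y := by
  obtain ⟨p, hp⟩ := h.exists_isPath
  exact ⟨_, (saw_of_path p hp).1, (saw_of_path p hp).2.1⟩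

theorem sg_pos {V : Type*} {G : SimpleGraph V} [Infinite V] (hG : LF G) (hc : G.Connected)
    (x : V) (n : ℕ) : 1 ≤ (SF hG x n).card := by
  obtain ⟨y, hy⟩ := (ball_finite hG n x).exists_notMem
  obtain ⟨l, h1, h2⟩ := exists_saw (hc.preconnected x y)
  have hl : n ≤ l.length := by
    by_contra hlt
    apply hy
    have := chain_near h1.1 (getLastD_mem x l)
    rw [h2] at this
    exact near_mono (by omega) this
  rw [Nat.one_le_iff_ne_zero, Finset.card_ne_zero]
  exact ⟨l.take n, mem_SF.2 ⟨(saw_take h1 n).1, by simp [hl]⟩⟩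

theorem SF_zero {V : Type*} {H : SimpleGraph V} (hH : LF H) (x : V) : SF hH x 0 = {[]} := by
  ext l
  rw [mem_SF]
  constructor
  · rintro ⟨_, h⟩; simpa using h
  · intro h; simp at h; subst h; exact ⟨saw_nil, rfl⟩

theorem sg_mono_deg {V : Type*} {H : SimpleGraph V} (hH : LF H) (Δ : ℕ)
    (hΔ : ∀ v, (H.neighborSet v).ncard ≤ Δ) (x : V) (m n : ℕ) :
    (SF hH x (m + n)).card ≤ Δ ^ n * (SF hH x m).card := by
  have h1 : ∀ y, (SF hH y 1).card ≤ Δ := by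
    intro y
    refine le_trans ?_ (hΔ y)
    rw [Set.ncard_eq_toFinset_card _ (hH y)]
    apply Finset.card_le_card_of_injOn (fun l => l.headD y)
    · intro l hl
      rw [Finset.mem_coe, mem_SF] at hl
      obtain ⟨h1, h2⟩ := hl
      obtain ⟨a, rfl⟩ := List.length_eq_one_iff.1 h2
      rw [saw_cons] at h1
      simpa using h1.1
    · intro a ha b hb h
      rw [Finset.mem_coe, mem_SF] at ha hb
      obtain ⟨a, rfl⟩ := List.length_eq_one_iff.1 ha.2
      obtain ⟨b, rfl⟩ := List.length_eq_one_iff.1 hb.2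
      simpa using h
  have h2 : ∀ n y, (SF hH y n).card ≤ Δ ^ n := by
    intro n
    induction n with
    | zero => intro y; simp [SF_zero]
    | succ n ih =>
      intro y
      calc _ ≤ Δ * (SF hH y n).card := sg_add hH y n 1 Δ h1
        _ ≤ Δ * Δ ^ n := Nat.mul_le_mul_left _ (ih y)
        _ = _ := by ring
  exact sg_add hH x m n _ (h2 n)

theorem sg_mul {V : Type*} {G : SimpleGraph V} (hG : LF G)
    (hvt : ∀ u w : V, ∃ γ : G ≃g G, γ u = w) (x : V) (n k : ℕ) :
    (SF hG x (n * k)).card ≤ (SF hG x n).card ^ k := by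
  induction k with
  | zero => simp [SF_zero]
  | succ k ih =>
    rw [Nat.mul_succ, pow_succ']
    exact (sg_add hG x (n * k) n _ (fun y => (sg_const hG hvt y x n).le)).trans
      (Nat.mul_le_mul_left _ ih)

theorem mu_facts {V : Type*} {G : SimpleGraph V} [Infinite V] (hG : LF G) (hc : G.Connected)
    (hvt : ∀ u w : V, ∃ γ : G ≃g G, γ u = w) (v : V) (μ : ℝ)
    (hμ : Tendsto (fun n : ℕ => ((SF hG v n).card : ℝ) ^ ((1 : ℝ) / n)) atTop (nhds μ)) :
    1 ≤ μ ∧ ∀ x n, μ ^ n ≤ ((SF hG x n).card : ℝ) := by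
  have hpos : ∀ n, (1 : ℝ) ≤ ((SF hG v n).card : ℝ) := fun n => by
    exact_mod_cast sg_pos hG hc v n
  have h1 : 1 ≤ μ := by
    apply ge_of_tendsto' hμ
    intro n
    exact Real.one_le_rpow (hpos n) (by positivity)
  refine ⟨h1, ?_⟩
  intro x n
  rw [sg_const hG hvt x v]
  rcases Nat.eq_zero_or_pos n with rfl | hn
  · simpa using hpos 0
  have hsub : Tendsto (fun k : ℕ => n * (k + 1)) atTop atTop := by
    apply tendsto_atTop_mono (f := fun k => k) _ tendsto_id
    intro k
    nlinarith
  have h2 := hμ.comp hsub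
  have h3 : μ ≤ ((SF hG v n).card : ℝ) ^ ((1 : ℝ) / n) := by
    apply le_of_tendsto' h2
    intro k
    simp only [Function.comp]
    have h4 : ((SF hG v (n * (k + 1))).card : ℝ) ≤ ((SF hG v n).card : ℝ) ^ (k + 1) := by
      exact_mod_cast sg_mul hG hvt v n (k + 1)
    calc _ ≤ (((SF hG v n).card : ℝ) ^ (k + 1)) ^ ((1 : ℝ) / ((n * (k + 1) : ℕ) : ℝ)) :=
          Real.rpow_le_rpow (by positivity) h4 (by positivity)
      _ = _ := by
          rw [← Real.rpow_natCast, ← Real.rpow_mul (by positivity)]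
          congr 1
          push_cast
          field_simp
  calc μ ^ n ≤ (((SF hG v n).card : ℝ) ^ ((1 : ℝ) / n)) ^ n :=
        pow_le_pow_left₀ (by linarith) h3 n
    _ = _ := by
        rw [← Real.rpow_natCast, ← Real.rpow_mul (by positivity)]
        rw [one_div_mul_cancel (by positivity), Real.rpow_one]

end Aug

namespace Aug
open Classical

theorem near_perm {V : Type*} {G : SimpleGraph V} (γ : Equiv.Perm V)
    (h : ∀ u w : V, G.Adj (γ u) (γ w) ↔ G.Adj u w) {r : ℕ} {x y : V} :
    near G r (γ x) (γ y) ↔ near G r x y := by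
  let g : G ≃g G := ⟨γ, fun {a b} => h a b⟩
  exact near_map g

theorem cofinite_orbit {V : Type*} {G : SimpleGraph V} (hc : G.Connected)
    (Γ A : Subgroup (Equiv.Perm V))
    (hΓaut : ∀ γ ∈ Γ, ∀ u w : V, G.Adj (γ u) (γ w) ↔ G.Adj u w)
    (hAΓ : A ≤ Γ) (ρ : V) (hf : FiniteCosetProperty Γ A ρ) :
    ∃ r0, ∀ z, ∃ α ∈ A, near G r0 z (α ρ) := by
  by_contra hcon
  push Not at hcon
  obtain ⟨s, ν, hν, -, hpart⟩ := hf
  have key : ∀ I : Finset (Fin (s + 1)), ∀ r, ∃ z, ∀ i ∈ I, ∀ α ∈ A,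
      ¬ near G r z (ν i (α ρ)) := by
    intro I
    induction I using Finset.induction_on with
    | empty => intro r; exact ⟨ρ, by simp⟩
    | insert i I hi ih =>
      intro r
      obtain ⟨zr, hzr⟩ := hcon r
      obtain ⟨d, hd⟩ := near_exists hc ρ zr
      obtain ⟨z, hz⟩ := ih (r + d + r)
      by_cases h : ∀ α ∈ A, ¬ near G r z (ν i (α ρ))
      · refine ⟨z, fun j hj α hα hn => ?_⟩
        rcases Finset.mem_insert.1 hj with rfl | hj
        · exact h α hα hn
        · exact hz j hj α hα (near_mono (by omega) hn)
      · push Not at h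
        obtain ⟨α, hα, hn⟩ := h
        have hm : near G d (ν i (α ρ)) (ν i (α zr)) := by
          rw [near_perm _ (hΓaut _ (hν i)), near_perm _ (hΓaut _ (hAΓ hα))]
          exact hd
        refine ⟨ν i (α zr), fun j hj α' hα' hn' => ?_⟩
        rcases Finset.mem_insert.1 hj with rfl | hj
        · rw [near_perm _ (hΓaut _ (hν j))] at hn'
          apply hzr (α⁻¹ * α') (A.mul_mem (A.inv_mem hα) hα')
          rw [← near_perm _ (hΓaut _ (hAΓ hα))]
          simpa using hn'
        · exact hz j hj α' hα' (near_trans (near_trans hn hm) hn')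
  obtain ⟨z, hz⟩ := key Finset.univ 0
  obtain ⟨i, ⟨α, hα, rfl⟩, -⟩ := hpart z
  exact hz i (Finset.mem_univ _) α hα (near_refl _ _)

theorem augment_facts {V : Type*} {G Gbar : SimpleGraph V} (hG : LF G) (hB : LF Gbar)
    (hc : G.Connected)
    (hproper : ∃ u w : V, Gbar.Adj u w ∧ ¬ G.Adj u w)
    (A : Subgroup (Equiv.Perm V))
    (hAaut : ∀ γ ∈ A, ∀ u w : V, G.Adj (γ u) (γ w) ↔ G.Adj u w)
    (hAbar : ∀ α ∈ A, ∀ u w : V, Gbar.Adj (α u) (α w) ↔ Gbar.Adj u w)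
    (ρ : V) (r0 : ℕ) (hr0 : ∀ z, ∃ α ∈ A, near G r0 z (α ρ)) :
    (∃ Δ : ℕ, ∀ v, (Gbar.neighborSet v).ncard ≤ Δ) ∧
    (∃ R0 : ℕ, 1 ≤ R0 ∧ ∀ x, ∃ u w, near G R0 x u ∧ near G R0 x w ∧ Gbar.Adj u w ∧ ¬ G.Adj u w) := by
  constructor
  · refine ⟨(BF hG r0 ρ).sup (fun z => (Gbar.neighborSet z).ncard), fun v => ?_⟩
    obtain ⟨α, hα, hn⟩ := hr0 v
    have h1 : (Gbar.neighborSet v).ncard = (Gbar.neighborSet (α⁻¹ v)).ncard := by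
      rw [← Set.ncard_image_of_injective (Gbar.neighborSet (α⁻¹ v)) α.injective]
      · congr 1
        ext t
        simp only [SimpleGraph.mem_neighborSet, Set.mem_image]
        constructor
        · intro h
          exact ⟨α⁻¹ t, by rw [← hAbar α hα]; simpa using h, by simp⟩
        · rintro ⟨t, h, rfl⟩
          rw [← hAbar α hα] at h
          simpa using h
    rw [h1]
    apply Finset.le_sup (f := fun z => (Gbar.neighborSet z).ncard)
    rw [mem_BF, ← near_perm α (hAaut α hα)]
    simpa using near_symm hn
  · obtain ⟨u0, w0, h1, h2⟩ := hproper
    obtain ⟨d1, hd1⟩ := near_exists hc ρ u0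
    obtain ⟨d2, hd2⟩ := near_exists hc ρ w0
    refine ⟨r0 + d1 + d2 + 1, by omega, fun x => ?_⟩
    obtain ⟨α, hα, hn⟩ := hr0 x
    refine ⟨α u0, α w0, ?_, ?_, (hAbar α hα _ _).2 h1, fun h => h2 ((hAaut α hα _ _).1 h)⟩
    · exact near_mono (by omega) (near_trans hn ((near_perm α (hAaut α hα)).2 hd1))
    · exact near_mono (by omega) (near_trans hn ((near_perm α (hAaut α hα)).2 hd2))

theorem final_step {V : Type*} {H : SimpleGraph V} (hH : LF H) (Δ : ℕ)
    (hΔ : ∀ v, (H.neighborSet v).ncard ≤ Δ) (v : V) (μ lam c : ℝ) (hμ1 : 1 ≤ μ)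
    (hlam : μ < lam) (hc : 0 < c) (h : ∀ n : ℕ, c * lam ^ n ≤ ((SF hH v n).card : ℝ)) :
    μ < liminf (fun n : ℕ => ((SF hH v n).card : ℝ) ^ ((1 : ℝ) / n)) atTop := by
  have hlt : μ < (μ + lam) / 2 := by linarith
  refine lt_of_lt_of_le hlt ?_
  have ht : Tendsto (fun n : ℕ => c ^ ((1 : ℝ) / n) * lam) atTop (nhds (1 * lam)) := by
    apply Tendsto.mul_const
    have h0 : Tendsto (fun n : ℕ => (1 : ℝ) / n) atTop (nhds 0) := tendsto_one_div_atTop_nhds_zero_nat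
    have := (Real.continuousAt_const_rpow (a := c) (b := 0) hc.ne').tendsto.comp h0
    simpa [Function.comp_def] using this
  apply le_liminf_of_le
  · apply IsBoundedUnder.isCoboundedUnder_ge
    refine ⟨Δ, ?_⟩
    rw [eventually_map]
    filter_upwards [eventually_ge_atTop 1] with n hn
    have h2 : ((SF hH v n).card : ℝ) ≤ (Δ : ℝ) ^ n := by
      have := sg_mono_deg hH Δ hΔ v 0 n
      rw [SF_zero, Finset.card_singleton, mul_one, zero_add] at this
      exact_mod_cast this
    calc _ ≤ ((Δ : ℝ) ^ n) ^ ((1 : ℝ) / n) :=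
          Real.rpow_le_rpow (by positivity) h2 (by positivity)
      _ = _ := by
        rw [← Real.rpow_natCast, ← Real.rpow_mul (by positivity), mul_one_div_cancel (by positivity),
          Real.rpow_one]
  · have h3 := ht.eventually (eventually_gt_nhds (show (μ + lam) / 2 < 1 * lam by linarith))
    filter_upwards [h3, eventually_ge_atTop 1] with n hn hn1
    refine hn.le.trans ?_
    have hl0 : 0 ≤ lam := by linarith
    calc c ^ ((1 : ℝ) / n) * lam = (c * lam ^ n) ^ ((1 : ℝ) / n) := by
          rw [Real.mul_rpow hc.le (by positivity), ← Real.rpow_natCast lam, ← Real.rpow_mul hl0,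
            mul_one_div_cancel (by positivity), Real.rpow_one]
      _ ≤ _ := Real.rpow_le_rpow (by positivity) (h n) (by positivity)

end Aug

namespace Aug
open Classical

/-- `a` and `b` are connected by a walk avoiding `y` -/
def Conn {V : Type*} (G : SimpleGraph V) (y a b : V) : Prop :=
  ∃ p : G.Walk a b, y ∉ p.support

theorem Conn.symm {V : Type*} {G : SimpleGraph V} {y a b : V} (h : Conn G y a b) :
    Conn G y b a := by
  obtain ⟨p, hp⟩ := h
  exact ⟨p.reverse, by simpa using hp⟩

theorem Conn.trans {V : Type*} {G : SimpleGraph V} {y a b c : V} (h : Conn G y a b)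
    (h' : Conn G y b c) : Conn G y a c := by
  obtain ⟨p, hp⟩ := h
  obtain ⟨q, hq⟩ := h'
  refine ⟨p.append q, ?_⟩
  rw [SimpleGraph.Walk.mem_support_append_iff]
  tauto

theorem Conn.ne_left {V : Type*} {G : SimpleGraph V} {y a b : V} (h : Conn G y a b) : a ≠ y := by
  rintro rfl
  obtain ⟨p, hp⟩ := h
  exact hp p.start_mem_support

theorem Conn.ne_right {V : Type*} {G : SimpleGraph V} {y a b : V} (h : Conn G y a b) : b ≠ y :=
  h.symm.ne_left

theorem conn_refl {V : Type*} {G : SimpleGraph V} {y a : V} (h : a ≠ y) : Conn G y a a :=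
  ⟨SimpleGraph.Walk.nil, by simpa using h.symm⟩

theorem conn_adj {V : Type*} {G : SimpleGraph V} {y a b : V} (hab : G.Adj a b) (h : a ≠ y)
    (h' : b ≠ y) : Conn G y a b :=
  ⟨SimpleGraph.Walk.cons hab SimpleGraph.Walk.nil, by simp [h.symm, h'.symm]⟩

theorem conn_map {V : Type*} {G : SimpleGraph V} (γ : G ≃g G) {y a b : V} :
    Conn G (γ y) (γ a) (γ b) ↔ Conn G y a b := by
  have key : ∀ (γ : G ≃g G) {y a b : V}, Conn G y a b → Conn G (γ y) (γ a) (γ b) := by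
    rintro γ y a b ⟨p, hp⟩
    refine ⟨p.map γ.toHom, ?_⟩
    rw [SimpleGraph.Walk.support_map]
    intro h
    obtain ⟨t, ht, e⟩ := List.mem_map.1 h
    have : t = y := γ.injective e
    exact hp (this ▸ ht)
  constructor
  · intro h
    have := key γ.symm h
    simpa using this
  · exact key γ

theorem conn_of_chain {V : Type*} {G : SimpleGraph V} {y a : V} {l : List V}
    (h : (a :: l).IsChain G.Adj) (hy : y ∉ a :: l) {t : V} (ht : t ∈ a :: l) : Conn G y a t := by
  induction l generalizing a with
  | nil => simp at ht; subst ht; exact conn_refl (by rintro rfl; simp at hy)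
  | cons b l ih =>
    rw [List.isChain_cons_cons] at h
    have ha : a ≠ y := by rintro rfl; simp at hy
    have hb : b ≠ y := by rintro rfl; simp at hy
    rcases List.mem_cons.1 ht with rfl | ht
    · exact conn_refl ha
    · exact (conn_adj h.1 ha hb).trans (ih h.2 (fun h' => hy (List.mem_cons_of_mem _ h')) ht)

theorem one_comp {V : Type*} {G : SimpleGraph V} {y : V} {l : List V} (h : IsSaw G y l)
    {t t' : V} (ht : t ∈ l) (ht' : t' ∈ l) : Conn G y t t' := by
  cases l with
  | nil => simp at ht
  | cons a l =>
    rw [saw_cons] at h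
    exact (conn_of_chain h.2.1.1 h.2.2 ht).symm.trans (conn_of_chain h.2.1.1 h.2.2 ht')

theorem conn_saw {V : Type*} {G : SimpleGraph V} {y a b : V} (h : Conn G y a b) :
    ∃ l, IsSaw G a l ∧ l.getLastD a = b ∧ y ∉ a :: l := by
  obtain ⟨p, hp⟩ := h
  obtain ⟨h1, h2, -⟩ := saw_of_path p.bypass (SimpleGraph.Walk.bypass_isPath p)
  refine ⟨_, h1, h2, ?_⟩
  rw [SimpleGraph.Walk.cons_tail_support]
  exact fun h => hp (SimpleGraph.Walk.support_bypass_subset_support p h)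

theorem conn_nbr {V : Type*} {G : SimpleGraph V} (hc : G.Connected) {y b : V} (hb : b ≠ y) :
    ∃ y1, G.Adj y y1 ∧ Conn G y b y1 := by
  obtain ⟨l, h1, h2⟩ := exists_saw (hc.preconnected y b)
  cases l with
  | nil => simp at h2; exact absurd h2.symm hb
  | cons a l =>
    have hbm : b ∈ a :: l := by rw [← h2]; exact getLastD_mem' _ _ (by simp)
    exact ⟨a, (saw_cons.1 h1).1, one_comp h1 hbm (by simp)⟩

theorem conn_other {V : Type*} {G : SimpleGraph V} [Infinite V] (hc : G.Connected)
    (hvt : ∀ u w : V, ∃ γ : G ≃g G, γ u = w)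
    (hcut : ∃ c a b : V, a ≠ c ∧ b ≠ c ∧ ¬ Conn G c a b) (y a : V) :
    ∃ y2, G.Adj y y2 ∧ ¬ Conn G y a y2 := by
  obtain ⟨c, a', b', h1, h2, h3⟩ := hcut
  obtain ⟨γ, rfl⟩ := hvt c y
  rw [← conn_map γ] at h3
  have h1' : γ a' ≠ γ c := fun h => h1 (γ.injective h)
  have h2' : γ b' ≠ γ c := fun h => h2 (γ.injective h)
  obtain ⟨p, hp, hp'⟩ := conn_nbr hc h1'
  obtain ⟨q, hq, hq'⟩ := conn_nbr hc h2'
  by_cases h : Conn G (γ c) a p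
  · refine ⟨q, hq, fun h4 => h3 ?_⟩
    exact hp'.trans (h.symm.trans (h4.trans hq'.symm))
  · exact ⟨p, hp, h⟩

theorem conn_swap {V : Type*} {G : SimpleGraph V} (hc : G.Connected) {y a t w : V}
    (h : Conn G y a t) (hw : ¬ Conn G y a w) (hwy : w ≠ y) : Conn G w y t := by
  obtain ⟨y1, hy1, hay1⟩ := conn_nbr hc h.ne_left
  obtain ⟨l, hl, he, hyl⟩ := conn_saw (hay1.symm.trans h)
  have hwl : w ∉ y1 :: l := fun hm => hw (hay1.trans (conn_of_chain hl.1 hyl hm))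
  have hch : (y :: y1 :: l).IsChain G.Adj := List.isChain_cons_cons.2 ⟨hy1, hl.1⟩
  have := getLastD_mem y1 l
  rw [he] at this
  exact conn_of_chain hch (by simp only [List.mem_cons, not_or] at hwl ⊢; exact ⟨hwy, hwl⟩)
    (List.mem_cons_of_mem _ this)

noncomputable def fS {V : Type*} {G : SimpleGraph V} (hG : LF G) (y a : V) (n : ℕ) :
    Finset (List V) := (SF hG y n).filter (fun l => ∀ t ∈ l, ¬ Conn G y a t)

theorem mem_fS {V : Type*} {G : SimpleGraph V} {hG : LF G} {y a : V} {n : ℕ} {l : List V} :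
    l ∈ fS hG y a n ↔ (IsSaw G y l ∧ l.length = n) ∧ ∀ t ∈ l, ¬ Conn G y a t := by
  rw [fS, Finset.mem_filter, mem_SF]

theorem fS_iso {V : Type*} {G : SimpleGraph V} (hG : LF G) (γ : G ≃g G) (y a : V) (n : ℕ) :
    (fS hG (γ y) (γ a) n).card = (fS hG y a n).card := by
  symm
  unfold fS
  apply card_iso hG γ
  intro l
  simp [conn_map]

theorem analytic_renewal (f p s : ℕ → ℝ) (μ : ℝ) (hμ : 0 ≤ μ) (hf : ∀ n, 0 ≤ f n)
    (hp : ∀ n, 0 ≤ p n) (hs : ∀ n, 1 ≤ s n) (hf0 : f 0 = 1) (hp0 : p 0 = 0)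
    (h1 : ∀ n, s n ≤ f n + μ * f (n + 1) + ∑ x ∈ Finset.HasAntidiagonal.antidiagonal n, p x.1 * s x.2)
    (h2 : ∀ n, 1 ≤ n → ∑ x ∈ Finset.HasAntidiagonal.antidiagonal n, p x.1 * f x.2 ≤ f n) : ¬ Summable f := by
  intro hsum
  have hle : ∀ n, p n ≤ f n := by
    intro n
    rcases Nat.eq_zero_or_pos n with rfl | hn
    · rw [hp0]; exact hf 0
    · refine le_trans ?_ (h2 n hn)
      have := Finset.single_le_sum (f := fun x : ℕ × ℕ => p x.1 * f x.2)
        (s := Finset.HasAntidiagonal.antidiagonal n) (fun x _ => mul_nonneg (hp _) (hf _))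
        (a := (n, 0)) (by simp)
      simpa [hf0] using this
  have hps : Summable p := Summable.of_nonneg_of_le hp hle hsum
  have hpn : Summable (fun n => ‖p n‖) := hps.norm
  have hfn : Summable (fun n => ‖f n‖) := hsum.norm
  have e1 := tsum_mul_tsum_eq_tsum_sum_antidiagonal_of_summable_norm hpn hfn
  obtain ⟨q, hq⟩ : ∃ q : ℕ → ℝ, q =
    fun n => ∑ x ∈ Finset.HasAntidiagonal.antidiagonal n, p x.1 * f x.2 := ⟨_, rfl⟩
  have hanti : Summable q := by
    rw [hq]
    exact (summable_norm_sum_mul_antidiagonal_of_summable_norm hpn hfn).of_norm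
  rw [← hq] at e1
  have hq0 : q 0 = 0 := by rw [hq]; simp [hp0]
  have hqf : ∀ n, q (n + 1) ≤ f (n + 1) := by
    intro n; rw [hq]; exact h2 (n + 1) (by omega)
  have e2 : ∑' n, f n = f 0 + ∑' n, f (n + 1) := hsum.tsum_eq_zero_add
  have e3 : ∑' n, q n = q 0 + ∑' n, q (n + 1) := hanti.tsum_eq_zero_add
  have e4 : ∑' n, q (n + 1) ≤ ∑' n, f (n + 1) :=
    Summable.tsum_le_tsum hqf ((summable_nat_add_iff 1).2 hanti) ((summable_nat_add_iff 1).2 hsum)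
  have hPF : (∑' n, p n) * (∑' n, f n) + 1 ≤ ∑' n, f n := by
    rw [e1, e3, hq0]
    linarith
  set P := ∑' n, p n with hP
  set F := ∑' n, f n with hF
  have hP0 : 0 ≤ P := tsum_nonneg hp
  have hF0 : 0 ≤ F := tsum_nonneg hf
  have hP1 : P < 1 := by
    by_contra hcon
    push Not at hcon
    have := le_mul_of_one_le_left hF0 hcon
    linarith
  have hbound : ∀ N : ℕ, ∑ n ∈ Finset.range N, s n ≤ F + μ * F + P * ∑ n ∈ Finset.range N, s n := by
    intro N
    have hFN : ∑ n ∈ Finset.range N, f n ≤ F := hsum.sum_le_tsum _ (fun i _ => hf i)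
    have hFN1 : ∑ n ∈ Finset.range N, f (n + 1) ≤ F := by
      have := Summable.sum_le_tsum (Finset.range N) (fun i _ => hf (i + 1)) ((summable_nat_add_iff 1).2 hsum)
      rw [hf0] at e2
      linarith
    let s' : ℕ → ℝ := fun n => if n < N then s n else 0
    have hs'0 : ∀ n, 0 ≤ s' n := by
      intro n; simp only [s']; split_ifs
      · linarith [hs n]
      · exact le_rfl
    have hs'sum : HasSum s' (∑ n ∈ Finset.range N, s n) := by
      have h3 : HasSum s' (∑ n ∈ Finset.range N, s' n) := by
        apply hasSum_sum_of_ne_finset_zero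
        intro b hb
        simp only [Finset.mem_range] at hb
        simp [s', hb]
      have h4 : ∑ n ∈ Finset.range N, s' n = ∑ n ∈ Finset.range N, s n := by
        apply Finset.sum_congr rfl
        intro n hn
        simp [s', Finset.mem_range.1 hn]
      rwa [h4] at h3
    have e5 := tsum_mul_tsum_eq_tsum_sum_antidiagonal_of_summable_norm hpn hs'sum.summable.norm
    have hanti' : Summable (fun n => ∑ x ∈ Finset.HasAntidiagonal.antidiagonal n, p x.1 * s' x.2) :=
      (summable_norm_sum_mul_antidiagonal_of_summable_norm hpn hs'sum.summable.norm).of_norm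
    rw [hs'sum.tsum_eq] at e5
    have h5 : ∑ n ∈ Finset.range N, ∑ x ∈ Finset.HasAntidiagonal.antidiagonal n, p x.1 * s x.2 ≤
        P * ∑ n ∈ Finset.range N, s n := by
      rw [hP, e5]
      refine le_trans (le_of_eq ?_) (hanti'.sum_le_tsum (Finset.range N)
        (fun i _ => Finset.sum_nonneg (fun x _ => mul_nonneg (hp _) (hs'0 _))))
      apply Finset.sum_congr rfl
      intro n hn
      apply Finset.sum_congr rfl
      intro x hx
      have := Finset.HasAntidiagonal.mem_antidiagonal.1 hx
      have h6 : x.2 < N := by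
        have := Finset.mem_range.1 hn; omega
      simp [s', h6]
    calc _ ≤ ∑ n ∈ Finset.range N, (f n + μ * f (n + 1) +
            ∑ x ∈ Finset.HasAntidiagonal.antidiagonal n, p x.1 * s x.2) := Finset.sum_le_sum (fun n _ => h1 n)
      _ = ∑ n ∈ Finset.range N, f n + μ * ∑ n ∈ Finset.range N, f (n + 1) +
            ∑ n ∈ Finset.range N, ∑ x ∈ Finset.HasAntidiagonal.antidiagonal n, p x.1 * s x.2 := by
          rw [Finset.sum_add_distrib, Finset.sum_add_distrib, Finset.mul_sum]
      _ ≤ _ := by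
          have := mul_le_mul_of_nonneg_left hFN1 hμ
          linarith
  obtain ⟨N, hN⟩ := exists_nat_gt ((F + μ * F) / (1 - P))
  have h7 : (N : ℝ) ≤ ∑ n ∈ Finset.range N, s n := by
    calc (N : ℝ) = ∑ n ∈ Finset.range N, (1 : ℝ) := by simp
      _ ≤ _ := Finset.sum_le_sum (fun n _ => hs n)
  rw [div_lt_iff₀ (by linarith)] at hN
  have h8 := hbound N
  have h9 := mul_le_mul_of_nonneg_right h7 (show (0 : ℝ) ≤ 1 - P by linarith)
  linarith

end Aug

namespace Aug
open Classical

theorem f_case1 {V : Type*} {G : SimpleGraph V} (hG : LF G) (hc : G.Connected)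
    {y a y2 a2 : V} (hadj : G.Adj y y2) (h1 : ¬ Conn G y a y2) (h2 : ¬ Conn G y2 a2 y) (n : ℕ) :
    (SF hG y2 n).card ≤ (fS hG y a (n + 1)).card + (fS hG y2 a2 n).card := by
  have hA : (fS hG y2 y n).card ≤ (fS hG y a (n + 1)).card := by
    apply Finset.card_le_card_of_injOn (fun l => y2 :: l)
    · intro l hl
      rw [Finset.mem_coe, mem_fS] at hl
      simp only [Finset.mem_coe]
      rw [mem_fS, saw_cons]
      have hyl : y ∉ l := fun hm => hl.2 y hm (conn_refl hadj.ne)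
      refine ⟨⟨⟨hadj, hl.1.1, ?_⟩, by simp [hl.1.2]⟩, ?_⟩
      · simp only [List.mem_cons, not_or]; exact ⟨hadj.ne, hyl⟩
      · intro t ht hcon
        rcases List.mem_cons.1 ht with rfl | ht
        · exact h1 hcon
        · exact hl.2 t ht (conn_swap hc hcon h1 hadj.ne.symm)
    · intro l _ l' _ h
      simpa using h
  refine le_trans ?_ (Nat.add_le_add_right hA _)
  rw [← Finset.card_filter_add_card_filter_not
    (fun l => ∀ t ∈ l, ¬ Conn G y2 y t)]
  apply Nat.add_le_add
  · exact le_of_eq rfl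
  · apply Finset.card_le_card
    intro l hl
    rw [Finset.mem_filter, mem_SF] at hl
    rw [mem_fS]
    refine ⟨hl.1, ?_⟩
    obtain ⟨hl1, hl2⟩ := hl
    push Not at hl2
    obtain ⟨t, ht, hyt⟩ := hl2
    intro t' ht' hcon
    exact h2 (hcon.trans ((one_comp hl1.1 ht' ht).trans hyt.symm))

noncomputable def pS {V : Type*} {G : SimpleGraph V} (hG : LF G) (y o : V) (n : ℕ) :
    Finset (List V) := (SF hG y n).filter (fun l => l.getLastD y = o)

theorem mem_pS {V : Type*} {G : SimpleGraph V} {hG : LF G} {y o : V} {n : ℕ} {l : List V} :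
    l ∈ pS hG y o n ↔ (IsSaw G y l ∧ l.length = n) ∧ l.getLastD y = o := by
  rw [pS, Finset.mem_filter, mem_SF]

theorem f_I1 {V : Type*} {G : SimpleGraph V} (hG : LF G)
    {y a o a' : V} (hadj : G.Adj o y) (h2 : ¬ Conn G o a' y) (n : ℕ) :
    (SF hG y n).card ≤ (fS hG y a n).card + (fS hG o a' (n + 1)).card +
      ∑ x ∈ Finset.HasAntidiagonal.antidiagonal n, (pS hG y o x.1).card * (SF hG o x.2).card := by
  have hsub : SF hG y n ⊆ fS hG y a n ∪ (SF hG y n).filter (fun l => o ∉ l) ∪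
      (Finset.HasAntidiagonal.antidiagonal n).biUnion
        (fun x => (pS hG y o x.1 ×ˢ SF hG o x.2).image (fun z => z.1 ++ z.2)) := by
    intro l hl
    by_cases ho : o ∈ l
    · apply Finset.mem_union_right
      rw [mem_SF] at hl
      obtain ⟨l1, l2, rfl⟩ := List.append_of_mem ho
      have e : l1 ++ o :: l2 = (l1 ++ [o]) ++ l2 := by simp
      rw [e] at hl ⊢
      rw [saw_app] at hl
      rw [Finset.mem_biUnion]
      refine ⟨((l1 ++ [o]).length, l2.length), ?_, ?_⟩
      · rw [Finset.HasAntidiagonal.mem_antidiagonal, ← hl.2]; simp only [List.length_append]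
      · rw [Finset.mem_image]
        refine ⟨(l1 ++ [o], l2), ?_, rfl⟩
        have e2 : (l1 ++ [o]).getLastD y = o := by simp
        rw [Finset.mem_product, mem_pS, mem_SF]
        exact ⟨⟨⟨hl.1.1, rfl⟩, e2⟩, e2 ▸ hl.1.2.1, rfl⟩
    · apply Finset.mem_union_left
      apply Finset.mem_union_right
      rw [Finset.mem_filter]
      exact ⟨hl, ho⟩
  have h3 : ((SF hG y n).filter (fun l => o ∉ l)).card ≤ (fS hG o a' (n + 1)).card := by
    apply Finset.card_le_card_of_injOn (fun l => y :: l)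
    · intro l hl
      rw [Finset.mem_coe, Finset.mem_filter, mem_SF] at hl
      simp only [Finset.mem_coe]
      rw [mem_fS, saw_cons]
      have ho : o ∉ y :: l := by
        simp only [List.mem_cons, not_or]; exact ⟨hadj.ne, hl.2⟩
      refine ⟨⟨⟨hadj, hl.1.1, ho⟩, by simp [hl.1.2]⟩, ?_⟩
      intro t ht hcon
      exact h2 (hcon.trans (conn_of_chain hl.1.1.1 ho ht).symm)
    · intro l _ l' _ h
      simpa using h
  calc _ ≤ _ := Finset.card_le_card hsub
    _ ≤ _ := Finset.card_union_le _ _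
    _ ≤ _ := by
      apply Nat.add_le_add
      · exact (Finset.card_union_le _ _).trans (Nat.add_le_add_left h3 _)
      · refine Finset.card_biUnion_le.trans (Finset.sum_le_sum ?_)
        intro x _
        exact Finset.card_image_le.trans (by rw [Finset.card_product])

theorem saw_reverse {V : Type*} {G : SimpleGraph V} {y o : V} {m : List V}
    (h : IsSaw G y (m ++ [o])) : IsSaw G o (m.reverse ++ [y]) := by
  have e : o :: (m.reverse ++ [y]) = (y :: (m ++ [o])).reverse := by simp
  unfold IsSaw
  rw [e, List.isChain_reverse, List.nodup_reverse]
  refine ⟨?_, h.2⟩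
  have : (fun a b => G.Adj b a) = G.Adj := by ext a b; exact G.adj_comm b a
  rw [this]
  exact h.1

theorem f_I2 {V : Type*} {G : SimpleGraph V} (hG : LF G)
    {y a o a' : V} (hadj : G.Adj o y) (h1 : Conn G y a o) (h2 : ¬ Conn G o a' y) (n : ℕ) :
      ∑ x ∈ Finset.HasAntidiagonal.antidiagonal n, (pS hG y o x.1).card * (fS hG y a x.2).card ≤
      (fS hG o a' n).card := by
  have e : ∑ x ∈ Finset.HasAntidiagonal.antidiagonal n, (pS hG y o x.1).card * (fS hG y a x.2).card
      = ((Finset.HasAntidiagonal.antidiagonal n).sigma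
        (fun x => pS hG y o x.1 ×ˢ fS hG y a x.2)).card := by
    rw [Finset.card_sigma]
    simp only [Finset.card_product]
  have hsplit : ∀ {k : ℕ} {l : List V}, l ∈ pS hG y o k → l = l.dropLast ++ [o] := by
    intro k l hl
    rw [mem_pS] at hl
    have hne : l ≠ [] := by
      rintro rfl
      simp at hl
      exact hadj.ne hl.2.symm
    have h5 := List.dropLast_append_getLast hne
    have h6 : l.getLast hne = o := by
      rw [← hl.2]
      nth_rewrite 2 [← h5]
      rw [getLastD_app]
      simp
    rw [h6] at h5
    exact h5.symm
  rw [e]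
  apply Finset.card_le_card_of_injOn
    (fun z : (Σ _ : ℕ × ℕ, List V × List V) => z.2.1.dropLast.reverse ++ y :: z.2.2)
  · rintro ⟨⟨i, j⟩, ⟨P, Q⟩⟩ hz
    simp only [Finset.coe_sigma, Set.mem_sigma_iff, Finset.mem_coe,
      Finset.HasAntidiagonal.mem_antidiagonal, Finset.mem_product] at hz
    obtain ⟨hij, hP, hQ⟩ := hz
    have hPe := hsplit hP
    simp only [Finset.mem_coe]
    generalize P.dropLast = m at hPe ⊢
    subst hPe
    rw [mem_pS] at hP
    rw [mem_fS] at hQ ⊢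
    have hrev := saw_reverse hP.1.1
    have hsaw : IsSaw G o (m.reverse ++ y :: Q) := by
      have e2 : m.reverse ++ y :: Q = (m.reverse ++ [y]) ++ Q := by simp
      rw [e2, saw_app]
      refine ⟨hrev, by simpa using hQ.1.1, ?_⟩
      intro t ht htQ
      have ht' : t = y ∨ t ∈ m ++ [o] := by
        simp only [List.mem_cons, List.mem_append, List.mem_reverse, List.not_mem_nil, or_false] at ht ⊢
        tauto
      rcases ht' with rfl | ht'
      · exact (List.nodup_cons.1 hQ.1.1.2).1 htQ
      · exact hQ.2 t htQ (h1.trans (one_comp hP.1.1 (by simp) ht'))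
    refine ⟨⟨hsaw, ?_⟩, ?_⟩
    · have h7 := hP.1.2
      have h8 := hQ.1.2
      simp only [List.length_append, List.length_reverse, List.length_cons, List.length_nil] at h7 ⊢
      omega
    · intro t ht hcon
      exact h2 (hcon.trans (one_comp hsaw ht (by simp)))
  · rintro ⟨⟨i, j⟩, ⟨P, Q⟩⟩ hz ⟨⟨i', j'⟩, ⟨P', Q'⟩⟩ hz' h
    simp only [Finset.coe_sigma, Set.mem_sigma_iff, Finset.mem_coe,
      Finset.HasAntidiagonal.mem_antidiagonal, Finset.mem_product] at hz hz'
    obtain ⟨hij, hP, hQ⟩ := hz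
    obtain ⟨hij', hP', hQ'⟩ := hz'
    have hPe := hsplit hP
    have hPe' := hsplit hP'
    simp only at h
    have hyP : y ∉ P'.dropLast.reverse := by
      rw [List.mem_reverse]
      intro hm
      rw [mem_pS] at hP'
      exact (List.nodup_cons.1 hP'.1.1.2).1 (List.mem_of_mem_dropLast hm)
    rw [mem_fS] at hQ' hQ
    have hyP1 : y ∉ P.dropLast.reverse := by
      rw [List.mem_reverse]
      intro hm
      rw [mem_pS] at hP
      exact (List.nodup_cons.1 hP.1.1.2).1 (List.mem_of_mem_dropLast hm)
    have hyQ : y ∉ Q := (List.nodup_cons.1 hQ.1.1.2).1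
    rw [List.append_cons_inj_of_notMem hyP1 hyQ] at h
    obtain ⟨h3, -, rfl⟩ := h
    have h4 : P.dropLast = P'.dropLast := List.reverse_injective h3
    rw [h4, ← hPe'] at hPe
    subst hPe
    rw [mem_pS] at hP hP'
    have : i = i' := by rw [← hP.1.2, ← hP'.1.2]
    subst this
    have : j = j' := by omega
    subst this
    rfl

theorem f_diverge {V : Type*} {G : SimpleGraph V} [Infinite V] (hG : LF G) (hc : G.Connected)
    (hvt : ∀ u w : V, ∃ γ : G ≃g G, γ u = w)
    (hcut : ∃ c a b : V, a ≠ c ∧ b ≠ c ∧ ¬ Conn G c a b) (μ : ℝ) (hμ1 : 1 ≤ μ)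
    (hμ : ∀ x n, μ ^ n ≤ ((SF hG x n).card : ℝ)) (y a : V) :
    ¬ Summable (fun n => ((fS hG y a n).card : ℝ) / μ ^ n) := by
  have hμ0 : 0 < μ := by linarith
  obtain ⟨y2, hadj, h1⟩ := conn_other hc hvt hcut y a
  obtain ⟨g, hg⟩ := hvt y y2
  by_cases h2 : Conn G y2 (g a) y
  · have hadj' : G.Adj (g.symm y) y := by
      rw [← g.map_adj_iff]; simpa [hg] using hadj
    have h1' : ¬ Conn G (g.symm y) (g.symm a) y := by
      rw [← conn_map g]; simpa [hg] using h1
    have h2' : Conn G y a (g.symm y) := by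
      rw [← conn_map g]; simpa [hg] using h2
    have heq : ∀ n, (fS hG (g.symm y) (g.symm a) n).card = (fS hG y a n).card :=
      fun n => fS_iso hG g.symm y a n
    set o := g.symm y with ho
    apply analytic_renewal (fun n => ((fS hG y a n).card : ℝ) / μ ^ n)
      (fun n => ((pS hG y o n).card : ℝ) / μ ^ n) (fun n => ((SF hG y n).card : ℝ) / μ ^ n) μ hμ0.le
    · intro n; positivity
    · intro n; positivity
    · intro n
      rw [le_div_iff₀ (by positivity), one_mul]
      exact hμ y n
    · have : fS hG y a 0 = {[]} := by
        ext l
        rw [mem_fS, Finset.mem_singleton]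
        constructor
        · rintro ⟨⟨_, h⟩, _⟩; simpa using h
        · rintro rfl; exact ⟨⟨saw_nil, rfl⟩, by simp⟩
      simp [this]
    · have : pS hG y o 0 = ∅ := by
        ext l
        rw [mem_pS]
        simp only [Finset.notMem_empty, iff_false]
        rintro ⟨⟨_, h⟩, h'⟩
        rw [List.length_eq_zero_iff] at h
        subst h
        simp at h'
        exact hadj'.ne h'.symm
      simp [this]
    · intro n
      have h3 := f_I1 hG (a := a) hadj' h1' n
      rw [heq] at h3
      have h3' : ((SF hG y n).card : ℝ) ≤ (fS hG y a n).card + (fS hG y a (n + 1)).card +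
        ∑ x ∈ Finset.HasAntidiagonal.antidiagonal n,
          ((pS hG y o x.1).card : ℝ) * (SF hG o x.2).card := by exact_mod_cast h3
      rw [div_le_iff₀ (by positivity), add_mul, add_mul, Finset.sum_mul]
      refine h3'.trans (le_of_eq ?_)
      congr 1
      · congr 1
        · field_simp
        · rw [pow_succ]; field_simp
      · apply Finset.sum_congr rfl
        intro x hx
        rw [← Finset.HasAntidiagonal.mem_antidiagonal.1 hx, pow_add, sg_const hG hvt o y]
        field_simp
    · intro n hn
      have h3 := f_I2 hG hadj' h2' h1' n
      rw [heq] at h3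
      have h3' : ∑ x ∈ Finset.HasAntidiagonal.antidiagonal n,
          ((pS hG y o x.1).card : ℝ) * (fS hG y a x.2).card ≤ (fS hG y a n).card := by
        exact_mod_cast h3
      rw [le_div_iff₀ (by positivity), Finset.sum_mul]
      refine le_trans (le_of_eq ?_) h3'
      apply Finset.sum_congr rfl
      intro x hx
      rw [← Finset.HasAntidiagonal.mem_antidiagonal.1 hx, pow_add]
      field_simp
  · intro hsum
    have h3 : ∀ n, (1 : ℝ) ≤ μ * (((fS hG y a (n + 1)).card : ℝ) / μ ^ (n + 1)) +
        ((fS hG y a n).card : ℝ) / μ ^ n := by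
      intro n
      have h4 := f_case1 hG hc hadj h1 h2 n
      rw [← hg, fS_iso] at h4
      have h4' : ((SF hG (g y) n).card : ℝ) ≤ (fS hG y a (n + 1)).card + (fS hG y a n).card := by
        exact_mod_cast h4
      have h5 := (hμ (g y) n).trans h4'
      have : μ * (((fS hG y a (n + 1)).card : ℝ) / μ ^ (n + 1)) +
        ((fS hG y a n).card : ℝ) / μ ^ n = ((fS hG y a (n + 1)).card + (fS hG y a n).card) / μ ^ n := by
        rw [pow_succ]; field_simp
      rw [this, le_div_iff₀ (by positivity), one_mul]
      exact h5
    have ht := hsum.tendsto_atTop_zero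
    have ht1 := (tendsto_add_atTop_iff_nat 1).2 ht
    have ht2 := (ht1.const_mul μ).add ht
    have := ge_of_tendsto' ht2 h3
    simp at this
    linarith

end Aug

namespace Aug
open Classical

theorem conn_of_near {V : Type*} {G : SimpleGraph V} {r : ℕ} {x y t : V} (h : near G r x t)
    (hy : ¬ near G r x y) : Conn G y x t := by
  obtain ⟨p, hp⟩ := h
  refine ⟨p, fun hm => hy ?_⟩
  exact ⟨p.takeUntil y hm, (SimpleGraph.Walk.length_takeUntil_le_length p hm).trans hp⟩

theorem deep {V : Type*} {G : SimpleGraph V} [Infinite V] (hc : G.Connected)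
    (hvt : ∀ u w : V, ∃ γ : G ≃g G, γ u = w)
    (hcut : ∃ c a b : V, a ≠ c ∧ b ≠ c ∧ ¬ Conn G c a b) {y y1 : V} (hadj : G.Adj y y1) (k : ℕ) :
    ∃ x, Conn G y y1 x ∧ ¬ near G k y x := by
  induction k with
  | zero =>
    refine ⟨y1, conn_refl hadj.ne.symm, ?_⟩
    rintro ⟨p, hp⟩
    exact hadj.ne (SimpleGraph.Walk.eq_of_length_eq_zero (p := p) (by omega))
  | succ k ih =>
    obtain ⟨x, hx, hk⟩ := ih
    obtain ⟨x', hx', hn⟩ := conn_other hc hvt hcut x y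
    have hxy : x ≠ y := hx.ne_right
    have hx'y : x' ≠ y := by
      rintro rfl
      exact hn (conn_refl hxy.symm)
    refine ⟨x', hx.trans (conn_adj hx' hxy hx'y), ?_⟩
    rintro ⟨p, hp⟩
    by_cases hm : x ∈ p.support
    · have := SimpleGraph.Walk.length_takeUntil_lt_length hm hx'.ne
      exact hk ⟨p.takeUntil x hm, by omega⟩
    · exact hn ⟨p, hm⟩

theorem deep_unif {V : Type*} {G : SimpleGraph V} [Infinite V] (hG : LF G) (hc : G.Connected)
    (hvt : ∀ u w : V, ∃ γ : G ≃g G, γ u = w)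
    (hcut : ∃ c a b : V, a ≠ c ∧ b ≠ c ∧ ¬ Conn G c a b) (k : ℕ) :
    ∃ D, ∀ y y1, G.Adj y y1 → ∃ x, Conn G y y1 x ∧ ¬ near G k y x ∧ near G D y x := by
  obtain ⟨v0⟩ := hc.nonempty
  have h : ∀ y1, ∃ D, G.Adj v0 y1 → ∃ x, Conn G v0 y1 x ∧ ¬ near G k v0 x ∧ near G D v0 x := by
    intro y1
    by_cases hadj : G.Adj v0 y1
    · obtain ⟨x, hx, hk⟩ := deep hc hvt hcut hadj k
      obtain ⟨D, hD⟩ := near_exists hc v0 x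
      exact ⟨D, fun _ => ⟨x, hx, hk, hD⟩⟩
    · exact ⟨0, fun h => absurd h hadj⟩
  choose D hD using h
  refine ⟨(hG v0).toFinset.sup D, fun y y1 hadj => ?_⟩
  obtain ⟨γ, rfl⟩ := hvt v0 y
  obtain ⟨y1, rfl⟩ := γ.surjective y1
  have hadj' : G.Adj v0 y1 := γ.map_adj_iff.1 hadj
  obtain ⟨x, h1, h2, h3⟩ := hD y1 hadj'
  refine ⟨γ x, (conn_map γ).2 h1, fun h => h2 ((near_map γ).1 h), (near_map γ).2 ?_⟩
  exact near_mono (Finset.le_sup (f := D) (by simpa using hadj')) h3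

theorem path_unif {V : Type*} {G : SimpleGraph V} (hG : LF G) (hc : G.Connected)
    (hvt : ∀ u w : V, ∃ γ : G ≃g G, γ u = w) (r : ℕ) :
    ∃ L, ∀ y u w, near G r y u → near G r y w → Conn G w y u →
      ∃ l, IsSaw G y l ∧ l.getLastD y = u ∧ w ∉ y :: l ∧ l.length ≤ L := by
  obtain ⟨v0⟩ := hc.nonempty
  have h : ∀ q : V × V, ∃ L, Conn G q.2 v0 q.1 →
      ∃ l, IsSaw G v0 l ∧ l.getLastD v0 = q.1 ∧ q.2 ∉ v0 :: l ∧ l.length ≤ L := by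
    rintro ⟨u, w⟩
    by_cases hcn : Conn G w v0 u
    · obtain ⟨l, h1, h2, h3⟩ := conn_saw hcn
      exact ⟨l.length, fun _ => ⟨l, h1, h2, h3, le_rfl⟩⟩
    · exact ⟨0, fun h => absurd h hcn⟩
  choose L hL using h
  refine ⟨(BF hG r v0 ×ˢ BF hG r v0).sup L, fun y u w hu hw hcn => ?_⟩
  obtain ⟨γ, rfl⟩ := hvt v0 y
  obtain ⟨u, rfl⟩ := γ.surjective u
  obtain ⟨w, rfl⟩ := γ.surjective w
  rw [near_map] at hu hw
  rw [conn_map] at hcn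
  obtain ⟨l, h1, h2, h3, h4⟩ := hL (u, w) hcn
  refine ⟨l.map γ, (saw_map γ _ _).2 h1, ?_, ?_, ?_⟩
  · rw [getLastD_map, h2]
  · rw [← List.map_cons (f := γ), List.mem_map]
    rintro ⟨t, ht, e⟩
    rw [γ.injective e] at ht
    exact h3 ht
  · rw [List.length_map]
    exact h4.trans (Finset.le_sup (f := L) (by
      rw [Finset.mem_product, mem_BF, mem_BF]; exact ⟨hu, hw⟩))

theorem connector {V : Type*} {G Gbar : SimpleGraph V} [Infinite V] (hG : LF G) (hc : G.Connected)
    (hvt : ∀ u w : V, ∃ γ : G ≃g G, γ u = w)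
    (hcut : ∃ c a b : V, a ≠ c ∧ b ≠ c ∧ ¬ Conn G c a b) (R0 : ℕ)
    (hR0 : ∀ x, ∃ u w, near G R0 x u ∧ near G R0 x w ∧ Gbar.Adj u w ∧ ¬ G.Adj u w) :
    ∃ L0, ∀ y a, ∃ (δ : List V) (w : V), IsSaw G y δ ∧ Gbar.Adj (δ.getLastD y) w ∧
      ¬ G.Adj (δ.getLastD y) w ∧ (∀ t ∈ δ, ¬ Conn G y a t) ∧ ¬ Conn G y a w ∧ w ∉ y :: δ ∧
      δ.length + 1 ≤ L0 := by
  obtain ⟨D, hD⟩ := deep_unif hG hc hvt hcut R0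
  obtain ⟨L, hL⟩ := path_unif hG hc hvt (D + R0)
  refine ⟨L + 1, fun y a => ?_⟩
  obtain ⟨y1, hadj, hay1⟩ := conn_other hc hvt hcut y a
  obtain ⟨x, hx, hxk, hxD⟩ := hD y y1 hadj
  obtain ⟨u, w, hu, hw, huw, huw'⟩ := hR0 x
  have hball : ∀ t, near G R0 x t → Conn G y y1 t := fun t ht =>
    hx.trans (conn_of_near ht (fun h => hxk (near_symm h)))
  have main : ∀ u w, near G R0 x u → near G R0 x w → Gbar.Adj u w → ¬ G.Adj u w →
      Conn G w y u → ∃ (δ : List V) (w : V), IsSaw G y δ ∧ Gbar.Adj (δ.getLastD y) w ∧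
      ¬ G.Adj (δ.getLastD y) w ∧ (∀ t ∈ δ, ¬ Conn G y a t) ∧ ¬ Conn G y a w ∧ w ∉ y :: δ ∧
      δ.length + 1 ≤ L + 1 := by
    intro u w hu hw huw huw' hcn
    obtain ⟨l, h1, h2, h3, h4⟩ := hL y u w (near_trans hxD hu) (near_trans hxD hw) hcn
    refine ⟨l, w, h1, h2 ▸ huw, h2 ▸ huw', ?_, ?_, h3, by omega⟩
    · intro t ht hcon
      have hul : u ∈ l := by
        rw [← h2]
        exact getLastD_mem' _ _ (List.ne_nil_of_mem ht)
      exact hay1 (hcon.trans ((one_comp h1 ht hul).trans (hball u hu).symm))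
    · intro hcon
      exact hay1 (hcon.trans (hball w hw).symm)
  obtain ⟨p, hp⟩ := (hc.preconnected y u).exists_isPath
  by_cases hm : w ∈ p.support
  · have : Conn G u y w := by
      refine ⟨p.takeUntil w hm, ?_⟩
      exact SimpleGraph.Walk.endpoint_notMem_support_takeUntil hp hm huw.ne
    exact main w u hw hu huw.symm (fun h => huw' h.symm) this
  · exact main u w hu hw huw huw' ⟨p, hm⟩

theorem split_unique {V : Type*} {G : SimpleGraph V} {y : V} {A1 A2 : List V} {w1 w2 : V}
    {T1 T2 : List V} (h1 : (y :: A1).IsChain G.Adj) (h2 : (y :: A2).IsChain G.Adj)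
    (h1' : ¬ G.Adj (A1.getLastD y) w1) (h2' : ¬ G.Adj (A2.getLastD y) w2)
    (h : A1 ++ w1 :: T1 = A2 ++ w2 :: T2) : A1 = A2 ∧ w1 = w2 ∧ T1 = T2 := by
  have key : ∀ {A1 A2 : List V} {w1 w2 : V} {T1 T2 c : List V}, (y :: A2).IsChain G.Adj →
    ¬ G.Adj (A1.getLastD y) w1 → A2 = A1 ++ c → w1 :: T1 = c ++ w2 :: T2 →
      A1 = A2 ∧ w1 = w2 ∧ T1 = T2 := by
    intro A1 A2 w1 w2 T1 T2 c h2 h1' e1 e2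
    cases c with
    | nil => simp at e1 e2; exact ⟨e1.symm, e2⟩
    | cons b c =>
      exfalso
      simp only [List.cons_append, List.cons.injEq] at e2
      obtain ⟨rfl, e2⟩ := e2
      rw [e1, chain_app, List.isChain_cons_cons] at h2
      exact h1' h2.2.1
  rcases List.append_eq_append_iff.1 h with ⟨c, e1, e2⟩ | ⟨c, e1, e2⟩
  · exact key h2 h1' e1 e2
  · obtain ⟨a, b, c⟩ := key h1 h2' e1 e2
    exact ⟨a.symm, b.symm, c.symm⟩

noncomputable def aS {V : Type*} (G : SimpleGraph V) {Gbar : SimpleGraph V} (hB : LF Gbar) (y a : V)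
    (n : ℕ) : Finset (List V) := (SF hB y n).filter (fun l => ∀ t ∈ l, ¬ Conn G y a t)

theorem mem_aS {V : Type*} {G Gbar : SimpleGraph V} {hB : LF Gbar} {y a : V} {n : ℕ} {l : List V} :
    l ∈ aS G hB y a n ↔ (IsSaw Gbar y l ∧ l.length = n) ∧ ∀ t ∈ l, ¬ Conn G y a t := by
  rw [aS, Finset.mem_filter, mem_SF]

theorem saw_mono {V : Type*} {G Gbar : SimpleGraph V} (hsub : G ≤ Gbar) {x : V} {l : List V}
    (h : IsSaw G x l) : IsSaw Gbar x l :=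
  ⟨h.1.imp (fun _ _ hab => hsub hab), h.2⟩

theorem aS_pos {V : Type*} {G Gbar : SimpleGraph V} [Infinite V] (hc : G.Connected)
    (hB : LF Gbar) (hsub : G ≤ Gbar)
    (hvt : ∀ u w : V, ∃ γ : G ≃g G, γ u = w)
    (hcut : ∃ c a b : V, a ≠ c ∧ b ≠ c ∧ ¬ Conn G c a b) (y a : V) (n : ℕ) :
    1 ≤ (aS G hB y a n).card := by
  obtain ⟨y1, hadj, hay1⟩ := conn_other hc hvt hcut y a
  obtain ⟨x, hx, hn⟩ := deep hc hvt hcut hadj n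
  obtain ⟨l, h1, h2⟩ := exists_saw (hc.preconnected y x)
  have hl : n ≤ l.length := by
    by_contra hlt
    apply hn
    have := chain_near h1.1 (getLastD_mem y l)
    rw [h2] at this
    exact near_mono (by omega) this
  rw [Nat.one_le_iff_ne_zero, Finset.card_ne_zero]
  refine ⟨l.take n, mem_aS.2 ⟨⟨saw_mono hsub (saw_take h1 n).1, by simp [hl]⟩, ?_⟩⟩
  intro t ht hcon
  have ht' : t ∈ l := List.mem_of_mem_take ht
  have hxl : x ∈ l := by
    rw [← h2]
    exact getLastD_mem' _ _ (List.ne_nil_of_mem ht')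
  exact hay1 (hcon.trans ((one_comp h1 ht' hxl).trans hx.symm))

end Aug

namespace Aug
open Classical

/-- validity of the glued walk -/
theorem glue_valid {V : Type*} {G Gbar : SimpleGraph V} (hc : G.Connected) (hsub : G ≤ Gbar)
    {y a : V} {P δ T : List V} {w : V} (hP : IsSaw G y P) (hPne : P ≠ [])
    (hPa : ∀ t ∈ P, ¬ Conn G y a t)
    (hδ : IsSaw G (P.getLastD y) δ) (hB : Gbar.Adj (δ.getLastD (P.getLastD y)) w)
    (hδa : ∀ t ∈ δ, ¬ Conn G (P.getLastD y) (P.dropLast.getLastD y) t)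
    (hwa : ¬ Conn G (P.getLastD y) (P.dropLast.getLastD y) w)
    (hwδ : w ∉ P.getLastD y :: δ)
    (hT : IsSaw Gbar w T) (hTa : ∀ t ∈ T, ¬ Conn G w (P.getLastD y) t) :
    IsSaw G y (P ++ δ) ∧
    IsSaw Gbar y ((P ++ δ) ++ w :: T) ∧ ∀ t ∈ (P ++ δ) ++ w :: T, ¬ Conn G y a t := by
  obtain ⟨P0, z, rfl⟩ := (List.eq_nil_or_concat P).resolve_left hPne
  simp only [List.concat_eq_append] at *
  have ez : (P0 ++ [z]).getLastD y = z := by simp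
  rw [ez] at hδ hB hδa hwa hwδ hTa
  rw [List.dropLast_concat] at hδa hwa
  have hP' := saw_app.1 hP
  have hz : z ∉ y :: P0 := fun h => hP'.2.2 z h (by simp)
  set q := P0.getLastD y with hq
  have hqm : q ∈ y :: P0 := getLastD_mem y P0
  have hside : ∀ t ∈ y :: P0, Conn G z q t := fun t ht =>
    (conn_of_chain hP'.1.1 hz hqm).symm.trans (conn_of_chain hP'.1.1 hz ht)
  have hPδ : IsSaw G y ((P0 ++ [z]) ++ δ) := by
    rw [saw_app, ez]
    refine ⟨hP, hδ, ?_⟩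
    intro t ht htδ
    have ht' : t = z ∨ t ∈ y :: P0 := by
      simp only [List.mem_cons, List.mem_append, List.not_mem_nil, or_false] at ht ⊢; tauto
    rcases ht' with rfl | ht'
    · exact (List.nodup_cons.1 hδ.2).1 htδ
    · exact hδa t htδ (hside t ht')
  have hw : w ∉ y :: ((P0 ++ [z]) ++ δ) := by
    intro h
    have ht' : w ∈ z :: δ ∨ w ∈ y :: P0 := by
      simp only [List.mem_cons, List.mem_append, List.not_mem_nil, or_false] at h ⊢; tauto
    rcases ht' with h | h
    · exact hwδ h
    · exact hwa (hside w h)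
  have hzm : z ∈ y :: ((P0 ++ [z]) ++ δ) := by simp
  have hwconn : ∀ t ∈ y :: ((P0 ++ [z]) ++ δ), Conn G w z t := fun t ht =>
    (conn_of_chain hPδ.1 hw hzm).symm.trans (conn_of_chain hPδ.1 hw ht)
  refine ⟨hPδ, ?_, ?_⟩
  · rw [saw_app, getLastD_app, ez, saw_cons]
    refine ⟨saw_mono hsub hPδ, ⟨hB, hT, ?_⟩, ?_⟩
    · have h1 : δ.getLastD z ∈ y :: ((P0 ++ [z]) ++ δ) := by
        have := getLastD_mem z δ
        simp only [List.mem_cons, List.mem_append] at this ⊢; tauto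
      intro h
      rcases List.mem_cons.1 h with h | h
      · exact hw (h ▸ h1)
      · exact hTa _ h (hwconn _ h1)
    · intro t ht h
      rcases List.mem_cons.1 h with h | h
      · exact hw (h ▸ ht)
      · exact hTa _ h (hwconn _ ht)
  · have hzy : z ≠ y := fun h => hz (by simp [h])
    have hza : ¬ Conn G y a z := hPa z (by simp)
    have hwna : ¬ Conn G y a w := by
      intro h
      have := conn_swap hc h hza hzy
      exact hwa ((hside y (by simp)).trans this)
    have hwy : w ≠ y := fun h => hw (by simp [h])
    intro t ht hcon
    rcases List.mem_append.1 ht with ht | ht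
    · exact hza (hcon.trans (one_comp hPδ ht (by simp)))
    rcases List.mem_cons.1 ht with rfl | ht
    · exact hwna hcon
    · have := conn_swap hc hcon hwna hwy
      exact hTa t ht ((hwconn y (by simp)).trans this)

theorem a_recursion {V : Type*} {G Gbar : SimpleGraph V} (hc : G.Connected) (hG : LF G)
    (hB : LF Gbar) (hsub : G ≤ Gbar) (L0 : ℕ) (δ : V → V → List V) (w : V → V → V)
    (hcon : ∀ y a, IsSaw G y (δ y a) ∧ Gbar.Adj ((δ y a).getLastD y) (w y a) ∧
      ¬ G.Adj ((δ y a).getLastD y) (w y a) ∧ (∀ t ∈ δ y a, ¬ Conn G y a t) ∧ ¬ Conn G y a (w y a) ∧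
      w y a ∉ y :: δ y a ∧ (δ y a).length + 1 ≤ L0)
    (J n : ℕ) (hn : J + L0 ≤ n) (y a : V) :
    ∑ j ∈ Finset.Icc 1 J, ∑ P ∈ fS hG y a j,
      (aS G hB (w (P.getLastD y) (P.dropLast.getLastD y)) (P.getLastD y)
        (n - j - ((δ (P.getLastD y) (P.dropLast.getLastD y)).length + 1))).card ≤
      L0 * (aS G hB y a n).card := by
  let d : List V → List V := fun P => δ (P.getLastD y) (P.dropLast.getLastD y)
  let u : List V → V := fun P => w (P.getLastD y) (P.dropLast.getLastD y)
  have e : ∑ j ∈ Finset.Icc 1 J, ∑ P ∈ fS hG y a j,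
      (aS G hB (w (P.getLastD y) (P.dropLast.getLastD y)) (P.getLastD y)
        (n - j - ((δ (P.getLastD y) (P.dropLast.getLastD y)).length + 1))).card =
      ((Finset.Icc 1 J).sigma (fun j => (fS hG y a j).sigma (fun P =>
        aS G hB (u P) (P.getLastD y) (n - j - ((d P).length + 1))))).card := by
    rw [Finset.card_sigma]
    apply Finset.sum_congr rfl
    intro j _
    rw [Finset.card_sigma]
  have e2 : L0 * (aS G hB y a n).card = (Finset.range L0 ×ˢ aS G hB y a n).card := by
    rw [Finset.card_product, Finset.card_range]
  rw [e, e2]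
  apply Finset.card_le_card_of_injOn
    (fun z : (Σ _ : ℕ, Σ _ : List V, List V) =>
      ((d z.2.1).length, (z.2.1 ++ d z.2.1) ++ u z.2.1 :: z.2.2))
  · rintro ⟨j, P, T⟩ hz
    simp only [Finset.coe_sigma, Set.mem_sigma_iff, Finset.mem_coe, Finset.mem_Icc, mem_fS,
      mem_aS] at hz
    obtain ⟨⟨hj1, hj2⟩, ⟨⟨hP, hPl⟩, hPa⟩, ⟨hT, hTl⟩, hTa⟩ := hz
    have hPne : P ≠ [] := by rintro rfl; simp at hPl; omega
    obtain ⟨c1, c2, c3, c4, c5, c6, c7⟩ := hcon (P.getLastD y) (P.dropLast.getLastD y)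
    obtain ⟨g1, g2, g3⟩ := glue_valid hc hsub hP hPne hPa c1 c2 c4 c5 c6 hT hTa
    simp only [Finset.mem_coe, Finset.mem_product, Finset.mem_range, mem_aS]
    refine ⟨by simp only [d]; omega, ⟨g2, ?_⟩, g3⟩
    simp only [List.length_append, List.length_cons, hTl, hPl, d]
    omega
  · rintro ⟨j, P, T⟩ hz ⟨j', P', T'⟩ hz' h
    simp only [Finset.coe_sigma, Set.mem_sigma_iff, Finset.mem_coe, Finset.mem_Icc, mem_fS,
      mem_aS] at hz hz'
    obtain ⟨⟨hj1, hj2⟩, ⟨⟨hP, hPl⟩, hPa⟩, ⟨hT, hTl⟩, hTa⟩ := hz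
    have hPne : P ≠ [] := by rintro rfl; simp at hPl; omega
    obtain ⟨c1, c2, c3, c4, c5, c6, c7⟩ := hcon (P.getLastD y) (P.dropLast.getLastD y)
    obtain ⟨g1, g2, g3⟩ := glue_valid hc hsub hP hPne hPa c1 c2 c4 c5 c6 hT hTa
    obtain ⟨⟨hj1', hj2'⟩, ⟨⟨hP', hPl'⟩, hPa'⟩, ⟨hT', hTl'⟩, hTa'⟩ := hz'
    have hPne' : P' ≠ [] := by rintro rfl; simp at hPl'; omega
    obtain ⟨c1', c2', c3', c4', c5', c6', c7'⟩ := hcon (P'.getLastD y) (P'.dropLast.getLastD y)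
    obtain ⟨g1', g2', g3'⟩ := glue_valid hc hsub hP' hPne' hPa' c1' c2' c4' c5' c6' hT' hTa'
    simp only [Prod.mk.injEq] at h
    obtain ⟨hlen, heq⟩ := h
    have hsp := split_unique (G := G) (y := y) g1.1 g1'.1 (by rw [getLastD_app]; exact c3)
      (by rw [getLastD_app]; exact c3') heq
    obtain ⟨s1, s2, rfl⟩ := hsp
    obtain ⟨rfl, -⟩ := List.append_inj' s1 hlen
    have : j = j' := by rw [← hPl, ← hPl']
    subst this
    rfl

theorem f_unif {V : Type*} {G : SimpleGraph V} [Infinite V] (hG : LF G) (hc : G.Connected)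
    (hvt : ∀ u w : V, ∃ γ : G ≃g G, γ u = w)
    (hcut : ∃ c a b : V, a ≠ c ∧ b ≠ c ∧ ¬ Conn G c a b) (μ : ℝ) (hμ1 : 1 ≤ μ)
    (hμ : ∀ x n, μ ^ n ≤ ((SF hG x n).card : ℝ)) (B : ℝ) :
    ∃ J, ∀ y a, B ≤ ∑ j ∈ Finset.Icc 1 J, ((fS hG y a j).card : ℝ) / μ ^ j := by
  have hμ0 : 0 < μ := by linarith
  obtain ⟨v0⟩ := hc.nonempty
  have h : ∀ y1, ∃ J, B ≤ ∑ j ∈ Finset.Icc 1 J, ((fS hG v0 y1 j).card : ℝ) / μ ^ j := by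
    intro y1
    have hd := f_diverge hG hc hvt hcut μ hμ1 hμ v0 y1
    have hd' : ¬ Summable (fun n => ((fS hG v0 y1 (n + 1)).card : ℝ) / μ ^ (n + 1)) :=
      fun h => hd ((summable_nat_add_iff 1).1 h)
    rw [not_summable_iff_tendsto_nat_atTop_of_nonneg (fun n => by positivity)] at hd'
    obtain ⟨J, hJ⟩ := (hd'.eventually_ge_atTop B).exists
    refine ⟨J, hJ.trans (le_of_eq ?_)⟩
    clear hJ
    induction J with
    | zero => simp
    | succ k ih => rw [Finset.sum_range_succ, Finset.sum_Icc_succ_top (by omega), ih]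
  choose J hJ using h
  refine ⟨(hG v0).toFinset.sup J, fun y a => ?_⟩
  obtain ⟨γ, rfl⟩ := hvt v0 y
  obtain ⟨a, rfl⟩ := γ.surjective a
  simp only [fS_iso]
  have key : ∃ y1, G.Adj v0 y1 ∧ ∀ t, Conn G v0 a t → Conn G v0 y1 t := by
    by_cases ha : a = v0
    · obtain ⟨y1, h1, -⟩ := conn_other hc hvt hcut v0 a
      exact ⟨y1, h1, fun t ht => absurd ha ht.ne_left⟩
    · obtain ⟨y1, h1, h2⟩ := conn_nbr hc ha
      exact ⟨y1, h1, fun t ht => h2.symm.trans ht⟩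
  obtain ⟨y1, h1, h2⟩ := key
  refine (hJ y1).trans ?_
  calc _ ≤ ∑ j ∈ Finset.Icc 1 (J y1), ((fS hG v0 a j).card : ℝ) / μ ^ j := by
        apply Finset.sum_le_sum
        intro j _
        apply div_le_div_of_nonneg_right _ (by positivity)
        have : (fS hG v0 y1 j).card ≤ (fS hG v0 a j).card := by
          apply Finset.card_le_card
          intro l hl
          rw [mem_fS] at hl ⊢
          exact ⟨hl.1, fun t ht hcon => hl.2 t ht (h2 t hcon)⟩
        exact_mod_cast this
    _ ≤ _ := by
        apply Finset.sum_le_sum_of_subset_of_nonneg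
        · apply Finset.Icc_subset_Icc_right
          exact Finset.le_sup (f := J) (by simpa using h1)
        · intro j _ _; positivity

theorem cut_case {V : Type*} {G Gbar : SimpleGraph V} [Infinite V] (hG : LF G) (hc : G.Connected)
    (hB : LF Gbar) (hsub : G ≤ Gbar)
    (hvt : ∀ u w : V, ∃ γ : G ≃g G, γ u = w)
    (hcut : ∃ c a b : V, a ≠ c ∧ b ≠ c ∧ ¬ Conn G c a b) (R0 : ℕ)
    (hR0 : ∀ x, ∃ u w, near G R0 x u ∧ near G R0 x w ∧ Gbar.Adj u w ∧ ¬ G.Adj u w)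
    (μ : ℝ) (hμ1 : 1 ≤ μ)
    (hμ : ∀ x n, μ ^ n ≤ ((SF hG x n).card : ℝ)) (v : V) :
    ∃ lam c : ℝ, μ < lam ∧ 0 < c ∧ ∀ n : ℕ, c * lam ^ n ≤ ((SF hB v n).card : ℝ) := by
  have hμ0 : 0 < μ := by linarith
  obtain ⟨L0, hL0⟩ := connector hG hc hvt hcut R0 hR0
  choose δ w hcon using hL0
  have hL1 : 1 ≤ L0 := by have := (hcon v v).2.2.2.2.2.2; omega
  obtain ⟨J, hJ⟩ := f_unif hG hc hvt hcut μ hμ1 hμ (2 * (L0 * μ ^ L0))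
  set M := J + L0 with hM
  have hM0 : (0 : ℝ) < M := by exact_mod_cast (by omega : 0 < M)
  set q : ℝ := (2 : ℝ) ^ ((1 : ℝ) / M) with hq
  have hqM : q ^ M = 2 := by
    rw [hq, ← Real.rpow_natCast, ← Real.rpow_mul (by norm_num), one_div_mul_cancel hM0.ne',
      Real.rpow_one]
  have hq1 : 1 < q := Real.one_lt_rpow (by norm_num) (by positivity)
  set z := μ * q with hz
  have hz1 : 1 ≤ z := by nlinarith
  have hz0 : 0 < z := by linarith
  have hzJ : ∀ y a, L0 * z ^ L0 ≤ ∑ j ∈ Finset.Icc 1 J, ((fS hG y a j).card : ℝ) / z ^ j := by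
    intro y a
    have h1 : (∑ j ∈ Finset.Icc 1 J, ((fS hG y a j).card : ℝ) / μ ^ j) / q ^ J ≤
        ∑ j ∈ Finset.Icc 1 J, ((fS hG y a j).card : ℝ) / z ^ j := by
      rw [Finset.sum_div]
      apply Finset.sum_le_sum
      intro j hj
      rw [div_div, hz, mul_pow]
      apply div_le_div_of_nonneg_left (by positivity) (by positivity)
      apply mul_le_mul_of_nonneg_left _ (by positivity)
      exact pow_le_pow_right₀ hq1.le (Finset.mem_Icc.1 hj).2
    refine le_trans ?_ h1
    rw [le_div_iff₀ (by positivity)]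
    refine le_trans (le_of_eq ?_) (hJ y a)
    rw [← hqM, hM, hz]
    ring
  refine ⟨z, (z ^ M)⁻¹, by nlinarith, by positivity, ?_⟩
  have main : ∀ n y a, (z ^ M)⁻¹ * z ^ n ≤ ((aS G hB y a n).card : ℝ) := by
    intro n
    induction n using Nat.strong_induction_on with
    | _ n ih =>
      intro y a
      rcases lt_or_ge n M with hn | hn
      · have h1 : (1 : ℝ) ≤ (aS G hB y a n).card := by
          exact_mod_cast aS_pos hc hB hsub hvt hcut y a n
        refine le_trans ?_ h1
        rw [inv_mul_le_iff₀ (by positivity), mul_one]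
        exact pow_le_pow_right₀ hz1 hn.le
      · have hr := a_recursion hc hG hB hsub L0 δ w hcon J n hn y a
        have hr' : ∑ j ∈ Finset.Icc 1 J, ∑ P ∈ fS hG y a j,
            ((aS G hB (w (P.getLastD y) (P.dropLast.getLastD y)) (P.getLastD y)
            (n - j - ((δ (P.getLastD y) (P.dropLast.getLastD y)).length + 1))).card : ℝ) ≤
            L0 * (aS G hB y a n).card := by exact_mod_cast hr
        have hlow : (z ^ M)⁻¹ * z ^ n / z ^ L0 * ∑ j ∈ Finset.Icc 1 J, ((fS hG y a j).card : ℝ) / z ^ j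
            ≤ L0 * (aS G hB y a n).card := by
          refine le_trans ?_ hr'
          rw [Finset.mul_sum]
          apply Finset.sum_le_sum
          intro j hj
          rw [Finset.mem_Icc] at hj
          have : (z ^ M)⁻¹ * z ^ n / z ^ L0 * (((fS hG y a j).card : ℝ) / z ^ j) =
              ∑ P ∈ fS hG y a j, (z ^ M)⁻¹ * z ^ (n - j - L0) := by
            rw [Finset.sum_const, nsmul_eq_mul]
            obtain ⟨m, hm⟩ : ∃ m, n - j - L0 = m := ⟨_, rfl⟩
            have e : z ^ n = z ^ m * z ^ j * z ^ L0 := by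
              rw [← pow_add, ← pow_add]; congr 1; omega
            rw [hm, e]
            have z1 : z ^ j ≠ 0 := by positivity
            have z2 : z ^ L0 ≠ 0 := by positivity
            generalize z ^ j = Z1 at *
            generalize z ^ L0 = Z2 at *
            generalize z ^ m = Z3 at *
            generalize (z ^ M)⁻¹ = Z4 at *
            field_simp
          rw [this]
          apply Finset.sum_le_sum
          intro P _
          have hlen := (hcon (P.getLastD y) (P.dropLast.getLastD y)).2.2.2.2.2.2
          refine le_trans ?_ (ih _ (by omega) _ _)
          apply mul_le_mul_of_nonneg_left _ (by positivity)
          apply pow_le_pow_right₀ hz1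
          omega
        have hup : L0 * ((z ^ M)⁻¹ * z ^ n) ≤ (z ^ M)⁻¹ * z ^ n / z ^ L0 *
            ∑ j ∈ Finset.Icc 1 J, ((fS hG y a j).card : ℝ) / z ^ j := by
          refine le_trans (le_of_eq ?_) (mul_le_mul_of_nonneg_left (hzJ y a) (by positivity))
          field_simp
        have hL : (0 : ℝ) < L0 := by exact_mod_cast hL1
        exact le_of_mul_le_mul_left (hup.trans hlow) hL
  intro n
  refine (main n v v).trans ?_
  have : (aS G hB v v n).card ≤ (SF hB v n).card := Finset.card_le_card (Finset.filter_subset _ _)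
  exact_mod_cast this

end Aug

namespace Aug
open Classical

theorem last_hit {V : Type*} {H : SimpleGraph V} {s b : V} (g : H.Walk s b) (X : Set V)
    (h : ∃ x ∈ g.support, x ∈ X) : ∃ y ∈ X, ∃ z : H.Walk y b, (∀ t ∈ z.support, t ∈ g.support) ∧
      ∀ t ∈ z.support, t ∈ X → t = y := by
  induction g with
  | nil =>
    obtain ⟨x, hx, hX⟩ := h
    simp at hx
    subst hx
    exact ⟨x, hX, SimpleGraph.Walk.nil, by simp, by simp⟩
  | cons hadj q ih =>
    rename_i a m b
    by_cases hq : ∃ x ∈ q.support, x ∈ X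
    · obtain ⟨y, hy, z, h1, h2⟩ := ih hq
      exact ⟨y, hy, z, fun t ht => by
        rw [SimpleGraph.Walk.support_cons]; exact List.mem_cons_of_mem _ (h1 t ht), h2⟩
    · obtain ⟨x, hx, hX⟩ := h
      rw [SimpleGraph.Walk.support_cons] at hx
      rcases List.mem_cons.1 hx with rfl | hx
      · refine ⟨x, hX, SimpleGraph.Walk.cons hadj q, fun t ht => ht, ?_⟩
        intro t ht htX
        rw [SimpleGraph.Walk.support_cons] at ht
        rcases List.mem_cons.1 ht with rfl | ht
        · rfl
        · exact absurd ⟨t, ht, htX⟩ hq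
      · exact absurd ⟨x, hx, hX⟩ hq

theorem menger2 {V : Type*} (H : SimpleGraph V) (a1 a2 : V) (B : Set V)
    (hsep : ∀ c, ∃ s, (s = a1 ∨ s = a2) ∧ ∃ b ∈ B, ∃ p : H.Walk s b, c ∉ p.support) :
    ∃ b1 ∈ B, ∃ b2 ∈ B, ∃ (p1 : H.Walk a1 b1) (p2 : H.Walk a2 b2),
      ∀ t ∈ p1.support, t ∉ p2.support := by
  let Inv : V → Prop := fun t => ∃ s s', ((s = a1 ∧ s' = a2) ∨ (s = a2 ∧ s' = a1)) ∧ ∃ b ∈ B,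
    ∃ (α : H.Walk s b) (β : H.Walk s' t), ∀ x ∈ α.support, x ∉ β.support
  have step : ∀ t t', H.Adj t t' → Inv t → Inv t' := by
    rintro t t' hadj ⟨s, s', hss, b, hb, α0, β, hdis0⟩
    obtain ⟨α, hα, hdis⟩ : ∃ α : H.Walk s b, α.IsPath ∧ ∀ x ∈ α.support, x ∉ β.support :=
      ⟨α0.bypass, α0.bypass_isPath, fun x hx => hdis0 x (α0.support_bypass_subset_support hx)⟩
    by_cases hm : t' ∈ α.support
    · set α1 := α.takeUntil t' hm with hα1
      have hα1s : ∀ x ∈ α1.support, x ∈ α.support := fun x hx =>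
        SimpleGraph.Walk.support_takeUntil_subset_support α hm hx
      have hα1p : α1.IsPath := hα.takeUntil hm
      obtain ⟨s'', hs'', b'', hb'', g, hg⟩ := hsep t'
      have hstart : s'' ∈ α1.support ∨ s'' ∈ β.support := by
        have : s'' = s ∨ s'' = s' := by
          rcases hss with ⟨rfl, rfl⟩ | ⟨rfl, rfl⟩ <;> tauto
        rcases this with rfl | rfl
        · left; exact α1.start_mem_support
        · right; exact β.start_mem_support
      obtain ⟨y, hy, z, hz1, hz2⟩ := last_hit g {x | x ∈ α1.support ∨ x ∈ β.support}
        ⟨s'', g.start_mem_support, hstart⟩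
      have hyt : y ≠ t' := by
        rintro rfl
        exact hg (hz1 _ z.start_mem_support)
      rcases hy with hy | hy
      · refine ⟨s, s', hss, b'', hb'', (α1.takeUntil y hy).append z, β.concat hadj, ?_⟩
        intro x hx hx'
        rw [SimpleGraph.Walk.mem_support_append_iff] at hx
        rw [SimpleGraph.Walk.support_concat] at hx'
        simp only [List.mem_append, List.mem_cons, List.not_mem_nil,
          or_false] at hx'
        rcases hx with hx | hx
        · have hx1 := SimpleGraph.Walk.support_takeUntil_subset_support α1 hy hx
          rcases hx' with hx' | rfl
          · exact hdis x (hα1s x hx1) hx'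
          · exact SimpleGraph.Walk.endpoint_notMem_support_takeUntil hα1p hy hyt.symm hx
        · rcases hx' with hx' | rfl
          · have := hz2 x hx (Or.inr hx')
            subst this
            exact hdis x (hα1s x hy) hx'
          · exact hg (hz1 _ hx)
      · refine ⟨s', s, by tauto, b'', hb'', (β.takeUntil y hy).append z, α1, ?_⟩
        intro x hx hx'
        rw [SimpleGraph.Walk.mem_support_append_iff] at hx
        rcases hx with hx | hx
        · exact hdis x (hα1s x hx') (SimpleGraph.Walk.support_takeUntil_subset_support β hy hx)
        · have := hz2 x hx (Or.inl hx')
          subst this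
          exact hdis x (hα1s x hx') hy
    · refine ⟨s, s', hss, b, hb, α, β.concat hadj, ?_⟩
      intro x hx hx'
      rw [SimpleGraph.Walk.support_concat] at hx'
      simp only [List.mem_append, List.mem_cons, List.not_mem_nil,
        or_false] at hx'
      rcases hx' with hx' | rfl
      · exact hdis x hx hx'
      · exact hm hx
  have follow : ∀ {s b : V} (p : H.Walk s b), Inv s → Inv b := by
    intro s b p
    induction p with
    | nil => exact id
    | cons h q ih => exact fun hi => ih (step _ _ h hi)
  have start : Inv a1 ∧ Inv a2 := by
    constructor
    · obtain ⟨s, hs, b, hb, p, hp⟩ := hsep a1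
      rcases hs with rfl | rfl
      · exact absurd p.start_mem_support hp
      · exact ⟨_, a1, Or.inr ⟨rfl, rfl⟩, b, hb, p, SimpleGraph.Walk.nil, by
          intro x hx hx'; simp at hx'; subst hx'; exact hp hx⟩
    · obtain ⟨s, hs, b, hb, p, hp⟩ := hsep a2
      rcases hs with rfl | rfl
      · exact ⟨_, a2, Or.inl ⟨rfl, rfl⟩, b, hb, p, SimpleGraph.Walk.nil, by
          intro x hx hx'; simp at hx'; subst hx'; exact hp hx⟩
      · exact absurd p.start_mem_support hp
  obtain ⟨s, hs, b, hb, p, -⟩ := hsep a1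
  have hI : Inv b := by
    rcases hs with rfl | rfl
    · exact follow p start.1
    · exact follow p start.2
  obtain ⟨s, s', hss, b', hb', α, β, hdis⟩ := hI
  rcases hss with ⟨rfl, rfl⟩ | ⟨rfl, rfl⟩
  · exact ⟨b', hb', b, hb, α, β, hdis⟩
  · exact ⟨b, hb, b', hb', β, α, fun t ht ht' => hdis t ht' ht⟩

def Gr {V : Type*} (G : SimpleGraph V) (U : Set V) : SimpleGraph V where
  Adj a b := G.Adj a b ∧ a ∈ U ∧ b ∈ U
  symm := ⟨fun _ _ h => ⟨h.1.symm, h.2.2, h.2.1⟩⟩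
  loopless := ⟨fun _ h => G.irrefl h.1⟩

theorem Gr_support {V : Type*} {G : SimpleGraph V} {U : Set V} {a b : V} (p : (Gr G U).Walk a b)
    (ha : a ∈ U) : ∀ t ∈ p.support, t ∈ U := by
  induction p with
  | nil => intro t ht; simp at ht; subst ht; exact ha
  | cons h q ih =>
    intro t ht
    rw [SimpleGraph.Walk.support_cons] at ht
    rcases List.mem_cons.1 ht with rfl | ht
    · exact ha
    · exact ih h.2.2 t ht

theorem Gr_chain {V : Type*} {G : SimpleGraph V} {U : Set V} {l : List V} (h : l.IsChain G.Adj)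
    (hU : ∀ t ∈ l, t ∈ U) : l.IsChain (Gr G U).Adj := by
  induction l with
  | nil => simp
  | cons a l ih =>
    cases l with
    | nil => simp
    | cons b l =>
      rw [List.isChain_cons_cons] at h ⊢
      exact ⟨⟨h.1, hU a (by simp), hU b (by simp)⟩,
        ih h.2 (fun t ht => hU t (List.mem_cons_of_mem _ ht))⟩

theorem Gr_of_walk {V : Type*} {G : SimpleGraph V} {U : Set V} {a b : V} (p : G.Walk a b)
    (hU : ∀ t ∈ p.support, t ∈ U) : ∃ q : (Gr G U).Walk a b, q.support = p.support := by
  induction p with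
  | nil => exact ⟨SimpleGraph.Walk.nil, by simp⟩
  | cons h p ih =>
    rename_i a m b
    have hU' : ∀ t ∈ p.support, t ∈ U := fun t ht => hU t (by
      rw [SimpleGraph.Walk.support_cons]; exact List.mem_cons_of_mem _ ht)
    obtain ⟨q, hq⟩ := ih hU'
    have h' : (Gr G U).Adj a m := ⟨h, hU a (by simp), hU' m p.start_mem_support⟩
    exact ⟨SimpleGraph.Walk.cons h' q, by simp [hq]⟩

/-- local 2-connectivity -/
def LocC {V : Type*} (G : SimpleGraph V) (R0 R : ℕ) : Prop :=
  ∀ x c a b, near G R0 x a → near G R0 x b → a ≠ c → b ≠ c →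
    ∃ p : G.Walk a b, c ∉ p.support ∧ ∀ t ∈ p.support, near G R x t

theorem walk_near {V : Type*} {G : SimpleGraph V} {a b : V} (p : G.Walk a b) {t : V}
    (ht : t ∈ p.support) : near G p.length a t :=
  ⟨p.takeUntil t ht, SimpleGraph.Walk.length_takeUntil_le_length p ht⟩

theorem locC_exists {V : Type*} {G : SimpleGraph V} (hG : LF G) (hc : G.Connected)
    (hvt : ∀ u w : V, ∃ γ : G ≃g G, γ u = w)
    (h2c : ∀ c a b : V, a ≠ c → b ≠ c → Conn G c a b) (R0 : ℕ) :
    ∃ R, R0 ≤ R ∧ LocC G R0 R := by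
  obtain ⟨v0⟩ := hc.nonempty
  have h : ∀ q : V × V × V, ∃ R, q.1 ≠ q.2.2 → q.2.1 ≠ q.2.2 →
      ∃ p : G.Walk q.1 q.2.1, q.2.2 ∉ p.support ∧ ∀ t ∈ p.support, near G R v0 t := by
    rintro ⟨a, b, c⟩
    by_cases hac : a ≠ c ∧ b ≠ c
    · obtain ⟨p, hp⟩ := h2c c a b hac.1 hac.2
      obtain ⟨d, hd⟩ := near_exists hc v0 a
      exact ⟨d + p.length, fun _ _ => ⟨p, hp, fun t ht => near_trans hd (walk_near p ht)⟩⟩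
    · exact ⟨0, fun h1 h2 => absurd ⟨h1, h2⟩ hac⟩
  choose f hf using h
  refine ⟨max R0 ((BF hG R0 v0 ×ˢ BF hG R0 v0 ×ˢ BF hG R0 v0).sup f), le_max_left _ _, ?_⟩
  intro x c a b ha hb hac hbc
  by_cases hcx : near G R0 x c
  · obtain ⟨γ, rfl⟩ := hvt v0 x
    obtain ⟨a, rfl⟩ := γ.surjective a
    obtain ⟨b, rfl⟩ := γ.surjective b
    obtain ⟨c, rfl⟩ := γ.surjective c
    rw [near_map] at ha hb hcx
    obtain ⟨p, h1, h2⟩ := hf (a, b, c) (fun h => hac (congrArg γ h)) (fun h => hbc (congrArg γ h))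
    have hle : f (a, b, c) ≤ max R0 ((BF hG R0 v0 ×ˢ BF hG R0 v0 ×ˢ BF hG R0 v0).sup f) := by
      refine le_trans ?_ (le_max_right _ _)
      apply Finset.le_sup (f := f)
      simp only [Finset.mem_product, mem_BF]
      exact ⟨ha, hb, hcx⟩
    refine ⟨p.map γ.toHom, ?_, ?_⟩
    · rw [SimpleGraph.Walk.support_map, List.mem_map]
      rintro ⟨t, ht, e⟩
      rw [γ.injective e] at ht
      exact h1 ht
    · intro t ht
      rw [SimpleGraph.Walk.support_map, List.mem_map] at ht
      obtain ⟨t, ht, rfl⟩ := ht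
      exact near_mono hle ((near_map γ).2 (h2 t ht))
  · obtain ⟨p, hp⟩ := ha
    obtain ⟨q, hq⟩ := hb
    have key : ∀ t ∈ (p.reverse.append q).support, near G R0 x t := by
      intro t ht
      rw [SimpleGraph.Walk.mem_support_append_iff, SimpleGraph.Walk.support_reverse,
        List.mem_reverse] at ht
      rcases ht with ht | ht
      · exact near_mono hp (walk_near p ht)
      · exact near_mono hq (walk_near q ht)
    exact ⟨p.reverse.append q, fun h => hcx (key c h), fun t ht => near_mono (le_max_left _ _) (key t ht)⟩

end Aug

namespace Aug
open Classical

theorem escape {V : Type*} {G : SimpleGraph V} {y : V} {l : List V} (hl : IsSaw G y l)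
    (hne : l ≠ []) {x : V} (hx : x ∈ y :: l) (c : V) :
    ∃ x', near G 1 x x' ∧ x' ≠ c ∧ ∃ b, (b = y ∨ b = l.getLastD y) ∧ ∃ q : G.Walk x' b,
      c ∉ q.support ∧ ∀ t ∈ q.support, t ∈ y :: l := by
  obtain ⟨W, hW⟩ := walk_of_chain y l hl.1
  have hP : W.IsPath := by rw [SimpleGraph.Walk.isPath_def, hW]; exact hl.2
  have hxW : x ∈ W.support := by rw [hW]; exact hx
  have hsp := W.take_spec hxW
  have hpp := hP.takeUntil hxW
  have hqp := hP.dropUntil hxW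
  have hps : ∀ t ∈ (W.takeUntil x hxW).support, t ∈ y :: l := fun t ht => by
    rw [← hW]; exact SimpleGraph.Walk.support_takeUntil_subset_support W hxW ht
  have hqs : ∀ t ∈ (W.dropUntil x hxW).support, t ∈ y :: l := fun t ht => by
    rw [← hW]; exact SimpleGraph.Walk.support_dropUntil_subset_support W hxW ht
  generalize W.takeUntil x hxW = p at *
  generalize W.dropUntil x hxW = q at *
  by_cases hcx : c = x
  · subst hcx
    cases q with
    | cons h q' =>
      rename_i m
      rw [SimpleGraph.Walk.cons_isPath_iff] at hqp
      refine ⟨_, near_adj h, ?_, _, Or.inr rfl, q', hqp.2, fun t ht => hqs t ?_⟩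
      · rintro rfl; exact hqp.2 q'.start_mem_support
      · rw [SimpleGraph.Walk.support_cons]; exact List.mem_cons_of_mem _ ht
    | nil =>
      have hpr := hpp.reverse
      have hprs : ∀ t ∈ p.reverse.support, t ∈ y :: l := fun t ht => hps t (by
        rwa [SimpleGraph.Walk.support_reverse, List.mem_reverse] at ht)
      rw [SimpleGraph.Walk.append_nil] at hsp
      rw [← hsp] at hW
      have hlen : p.reverse.support.length = l.length + 1 := by
        rw [SimpleGraph.Walk.support_reverse, hW]; simp
      generalize p.reverse = r at *
      have hll : l.length ≠ 0 := by simpa using hne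
      revert hpr hprs hlen
      generalize l.getLastD y = e at *
      intro hpr hprs hlen
      cases r with
      | nil => simp at hlen; exact absurd (by simp [hlen]) hll
      | cons h q' =>
        rw [SimpleGraph.Walk.cons_isPath_iff] at hpr
        refine ⟨_, near_adj h, ?_, _, Or.inl rfl, q', hpr.2, fun t ht => hprs t ?_⟩
        · rintro rfl; exact hpr.2 q'.start_mem_support
        · rw [SimpleGraph.Walk.support_cons]; exact List.mem_cons_of_mem _ ht
  · by_cases hcq : c ∈ q.support
    · refine ⟨x, near_refl _ _, fun h => hcx h.symm, y, Or.inl rfl, p.reverse, ?_, ?_⟩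
      · rw [SimpleGraph.Walk.support_reverse, List.mem_reverse]
        intro hcp
        rw [← hsp, SimpleGraph.Walk.isPath_def, SimpleGraph.Walk.support_append,
          List.nodup_append'] at hP
        refine hP.2.2 hcp ?_
        rw [← SimpleGraph.Walk.cons_tail_support q] at hcq
        rcases List.mem_cons.1 hcq with h | h
        · exact absurd h hcx
        · exact h
      · intro t ht
        rw [SimpleGraph.Walk.support_reverse, List.mem_reverse] at ht
        exact hps t ht
    · exact ⟨x, near_refl _ _, fun h => hcx h.symm, _, Or.inr rfl, q, hcq, hqs⟩

theorem saw_of_path' {V : Type*} {G : SimpleGraph V} {x y : V} (p : G.Walk x y) (hp : p.IsPath) :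
    ∃ l, IsSaw G x l ∧ l.getLastD x = y ∧ x :: l = p.support := by
  exact ⟨p.support.tail, (saw_of_path p hp).1, (saw_of_path p hp).2.1, SimpleGraph.Walk.cons_tail_support p⟩

theorem local_surgery {V : Type*} {G Gbar : SimpleGraph V} (hG : LF G) (hsub : G ≤ Gbar)
    {R0 R : ℕ} (hR1 : 1 ≤ R0) (hR : R0 ≤ R) (hL : LocC G R0 R)
    {y : V} {l : List V} (hl : IsSaw G y l)
    (hne : l ≠ []) {x : V} (hx : x ∈ y :: l) {u w : V} (hu : near G R0 x u) (hw : near G R0 x w)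
    (hA : Gbar.Adj u w) (hN : ¬ G.Adj u w) :
    ∃ T, IsSaw Gbar y T ∧ T.getLastD y = l.getLastD y ∧ (∀ t ∈ T, t ∈ y :: l ∨ near G R x t) ∧
      ¬ (y :: T).IsChain G.Adj ∧ T.length ≤ l.length + (BF hG R x).card := by
  set U : Set V := {t | t ∈ y :: l ∨ near G R x t} with hU
  have hsep : ∀ c, ∃ s, (s = u ∨ s = w) ∧ ∃ b ∈ ({y, l.getLastD y} : Set V),
      ∃ p : (Gr G U).Walk s b, c ∉ p.support := by
    intro c
    obtain ⟨x', hx', hxc, b, hb, q, hq, hqs⟩ := escape hl hne hx c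
    obtain ⟨s, hs, hsn, hsc⟩ : ∃ s, (s = u ∨ s = w) ∧ near G R0 x s ∧ s ≠ c := by
      by_cases huc : u = c
      · exact ⟨w, Or.inr rfl, hw, fun h => hA.ne (huc.trans h.symm)⟩
      · exact ⟨u, Or.inl rfl, hu, huc⟩
    obtain ⟨p, hp, hps⟩ := hL x c s x' hsn (near_mono hR1 hx') hsc hxc
    obtain ⟨p', hp'⟩ := Gr_of_walk (U := U) p (fun t ht => Or.inr (hps t ht))
    obtain ⟨q', hq'⟩ := Gr_of_walk (U := U) q (fun t ht => Or.inl (hqs t ht))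
    refine ⟨s, hs, b, hb, p'.append q', ?_⟩
    rw [SimpleGraph.Walk.mem_support_append_iff, hp', hq']
    tauto
  have main : ∀ u w : V, near G R0 x u → near G R0 x w → Gbar.Adj u w → ¬ G.Adj u w →
      ∀ (p1 : (Gr G U).Walk u y) (p2 : (Gr G U).Walk w (l.getLastD y)),
      (∀ t ∈ p1.support, t ∉ p2.support) →
      ∃ T, IsSaw Gbar y T ∧ T.getLastD y = l.getLastD y ∧ (∀ t ∈ T, t ∈ y :: l ∨ near G R x t) ∧
      ¬ (y :: T).IsChain G.Adj ∧ T.length ≤ l.length + (BF hG R x).card := by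
    intro u w hu hw hA hN p1 p2 hdis
    have huU : u ∈ U := Or.inr (near_mono hR hu)
    have hwU : w ∈ U := Or.inr (near_mono hR hw)
    have hle : Gr G U ≤ Gbar := fun a b h => hsub h.1
    obtain ⟨A, hA1, hA2, hA3⟩ := saw_of_path' p1.bypass.reverse p1.bypass_isPath.reverse
    obtain ⟨C, hC1, hC2, hC3⟩ := saw_of_path' p2.bypass p2.bypass_isPath
    have hAs : ∀ t ∈ y :: A, t ∈ p1.support := fun t ht => by
      rw [hA3, SimpleGraph.Walk.support_reverse, List.mem_reverse] at ht
      exact p1.support_bypass_subset_support ht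
    have hCs : ∀ t ∈ w :: C, t ∈ p2.support := fun t ht => by
      rw [hC3] at ht
      exact p2.support_bypass_subset_support ht
    have hsaw : IsSaw Gbar y (A ++ w :: C) := by
      rw [saw_app]
      refine ⟨saw_mono hle hA1, ?_, fun t ht ht' => hdis t (hAs t ht) (hCs t ht')⟩
      rw [hA2, saw_cons]
      refine ⟨hA, saw_mono hle hC1, fun h => ?_⟩
      exact hdis u p1.start_mem_support (hCs u h)
    have hTU : ∀ t ∈ y :: (A ++ w :: C), t ∈ U := by
      intro t ht
      rw [← List.cons_append, List.mem_append] at ht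
      rcases ht with ht | ht
      · exact Gr_support p1 huU t (hAs t ht)
      · exact Gr_support p2 hwU t (hCs t ht)
    refine ⟨A ++ w :: C, hsaw, ?_, fun t ht => hTU t (List.mem_cons_of_mem _ ht), ?_, ?_⟩
    · rw [getLastD_app, List.getLastD_cons, hC2]
    · rw [chain_app, hA2, List.isChain_cons_cons]
      exact fun h => hN h.2.1
    · have h1 : (y :: (A ++ w :: C)).toFinset ⊆ (y :: l).toFinset ∪ BF hG R x := by
        intro t ht
        rw [List.mem_toFinset] at ht
        rw [Finset.mem_union, List.mem_toFinset, mem_BF]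
        exact hTU t ht
      have h2 := Finset.card_le_card h1
      have h3 := Finset.card_union_le (y :: l).toFinset (BF hG R x)
      rw [List.toFinset_card_of_nodup hsaw.2] at h2
      rw [List.toFinset_card_of_nodup hl.2] at h3
      simp only [List.length_cons] at h2 h3
      omega
  obtain ⟨b1, hb1, b2, hb2, p1, p2, hdis⟩ := menger2 (Gr G U) u w {y, l.getLastD y} hsep
  have hne12 : b1 ≠ b2 := by
    rintro rfl
    exact hdis _ p1.end_mem_support p2.end_mem_support
  rcases hb1 with h1 | h1 <;> rcases hb2 with h2 | h2
  · exact absurd (h1.trans h2.symm) hne12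
  · subst h1; rw [Set.mem_singleton_iff] at h2; subst h2
    exact main u w hu hw hA hN p1 p2 hdis
  · subst h2; rw [Set.mem_singleton_iff] at h1; subst h1
    exact main w u hw hu hA.symm (fun h => hN h.symm) p2 p1 (fun t h h' => hdis t h' h)
  · exact absurd (h1.trans h2.symm) hne12

end Aug

namespace Aug
open Classical

theorem sum_split {V : Type*} {H : SimpleGraph V} (hH : LF H) (x : V) (m n : ℕ)
    (f : List V → ℝ) (g : V → List V → ℝ) (hf : ∀ c, 0 ≤ f c) (hg : ∀ y d, 0 ≤ g y d) :
    ∑ l ∈ SF hH x (m + n), f (l.take m) * g ((l.take m).getLastD x) (l.drop m) ≤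
      ∑ c ∈ SF hH x m, f c * ∑ d ∈ SF hH (c.getLastD x) n, g (c.getLastD x) d := by
  have hmaps : ∀ l ∈ SF hH x (m + n), l.take m ∈ SF hH x m := by
    intro l hl
    rw [mem_SF] at hl ⊢
    exact ⟨(saw_take hl.1 m).1, by rw [List.length_take]; omega⟩
  rw [← Finset.sum_fiberwise_of_maps_to hmaps]
  refine Finset.sum_le_sum fun c hc => ?_
  rw [Finset.mul_sum]
  have hinj : Set.InjOn (fun l : List V => l.drop m)
      (((SF hH x (m + n)).filter (fun l => l.take m = c) : Finset (List V)) : Set (List V)) := by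
    intro a ha b hb hab
    simp only [Finset.coe_filter, Set.mem_ofPred_eq] at ha hb
    rw [← List.take_append_drop m a, ← List.take_append_drop m b, ha.2, hb.2]
    exact congrArg _ hab
  calc ∑ l ∈ (SF hH x (m + n)).filter (fun l => l.take m = c),
        f (l.take m) * g ((l.take m).getLastD x) (l.drop m)
      = ∑ l ∈ (SF hH x (m + n)).filter (fun l => l.take m = c),
        (fun d => f c * g (c.getLastD x) d) (l.drop m) := by
        refine Finset.sum_congr rfl fun l hl => ?_
        rw [Finset.mem_filter] at hl
        rw [hl.2]
    _ = ∑ d ∈ ((SF hH x (m + n)).filter (fun l => l.take m = c)).image (fun l => l.drop m),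
        f c * g (c.getLastD x) d := by
        rw [Finset.sum_image hinj]
    _ ≤ _ := by
        refine Finset.sum_le_sum_of_subset_of_nonneg ?_ (fun d _ _ => mul_nonneg (hf _) (hg _ _))
        intro d hd
        rw [Finset.mem_image] at hd
        obtain ⟨l, hl, rfl⟩ := hd
        rw [Finset.mem_filter, mem_SF] at hl
        rw [mem_SF, ← hl.2]
        exact ⟨(saw_take hl.1.1 m).2.1, by rw [List.length_drop]; omega⟩

/-- number of good chunks -/
noncomputable def gc {V : Type*} (Lp : ℕ) (P : V → List V → Prop) : ℕ → V → List V → ℕ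
  | 0, _, _ => 0
  | N + 1, y, l => (if P y (l.take Lp) then 1 else 0) +
      gc Lp P N ((l.take Lp).getLastD y) (l.drop Lp)

theorem gc_sum {V : Type*} {G : SimpleGraph V} (hG : LF G) (Lp : ℕ) (P : V → List V → Prop)
    (a s t q : ℝ) (ht : 0 ≤ t) (hs : ∀ y, ((SF hG y Lp).card : ℝ) ≤ s)
    (ha : ∀ y, (((SF hG y Lp).filter (fun c => ¬ P y c)).card : ℝ) ≤ a)
    (hq : a + t * s ≤ q) (N : ℕ) (x : V) :
    ∑ l ∈ SF hG x (N * Lp), t ^ gc Lp P N x l ≤ q ^ N := by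
  induction N generalizing x with
  | zero => simp [SF_zero, gc]
  | succ N ih =>
    have hq0 : 0 ≤ q := by
      have h1 := ha x
      have h2 := hs x
      have : (0:ℝ) ≤ a := le_trans (by positivity) h1
      have : (0:ℝ) ≤ s := le_trans (by positivity) h2
      have : 0 ≤ t * s := by positivity
      linarith
    have e : (N + 1) * Lp = Lp + N * Lp := by ring
    rw [e]
    have h := sum_split hG x Lp (N * Lp) (fun c => t ^ (if P x c then 1 else 0))
      (fun y d => t ^ gc Lp P N y d) (fun c => by positivity) (fun y d => by positivity)
    simp only [gc, pow_add]
    refine h.trans ?_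
    calc _ ≤ ∑ c ∈ SF hG x Lp, t ^ (if P x c then 1 else 0) * q ^ N := by
          refine Finset.sum_le_sum fun c hc => ?_
          exact mul_le_mul_of_nonneg_left (ih _) (by positivity)
      _ = (∑ c ∈ SF hG x Lp, t ^ (if P x c then 1 else 0)) * q ^ N := by
          rw [Finset.sum_mul]
      _ ≤ q * q ^ N := by
          refine mul_le_mul_of_nonneg_right ?_ (by positivity)
          refine le_trans ?_ hq
          calc _ ≤ ∑ c ∈ SF hG x Lp, ((if ¬ P x c then 1 else 0) + t) := by
                refine Finset.sum_le_sum fun c hc => ?_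
                by_cases hp : P x c <;> simp [hp, ht]
            _ = (((SF hG x Lp).filter (fun c => ¬ P x c)).card : ℝ) + t * (SF hG x Lp).card := by
                rw [Finset.sum_add_distrib, Finset.sum_boole, Finset.sum_const, nsmul_eq_mul]
                ring
            _ ≤ _ := by
                have := mul_le_mul_of_nonneg_left (hs x) ht
                linarith [ha x]
      _ = _ := by ring

theorem gc_few {V : Type*} {G : SimpleGraph V} (hG : LF G) (Lp : ℕ) (P : V → List V → Prop)
    (a s t q : ℝ) (ht : 0 < t) (ht1 : t ≤ 1) (hs : ∀ y, ((SF hG y Lp).card : ℝ) ≤ s)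
    (ha : ∀ y, (((SF hG y Lp).filter (fun c => ¬ P y c)).card : ℝ) ≤ a)
    (hq : a + t * s ≤ q) (N M : ℕ) (x : V) :
    (((SF hG x (N * Lp)).filter (fun l => gc Lp P N x l < M)).card : ℝ) * t ^ M ≤ q ^ N := by
  refine le_trans ?_ (gc_sum hG Lp P a s t q ht.le hs ha hq N x)
  calc (((SF hG x (N * Lp)).filter (fun l => gc Lp P N x l < M)).card : ℝ) * t ^ M
      = ∑ l ∈ (SF hG x (N * Lp)).filter (fun l => gc Lp P N x l < M), t ^ M := by
        rw [Finset.sum_const, nsmul_eq_mul]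
    _ ≤ ∑ l ∈ (SF hG x (N * Lp)).filter (fun l => gc Lp P N x l < M), t ^ gc Lp P N x l := by
        refine Finset.sum_le_sum fun l hl => ?_
        rw [Finset.mem_filter] at hl
        exact pow_le_pow_of_le_one ht.le ht1 hl.2.le
    _ ≤ _ := Finset.sum_le_sum_of_subset_of_nonneg (Finset.filter_subset _ _)
        (fun _ _ _ => by positivity)

/-- markings -/
noncomputable def MB {V : Type*} (Lp : ℕ) (P : V → List V → Prop) :
    ℕ → ℕ → V → List V → Finset (List Bool)
  | 0, 0, _, _ => {[]}
  | 0, _ + 1, _, _ => ∅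
  | N + 1, 0, y, l => (MB Lp P N 0 ((l.take Lp).getLastD y) (l.drop Lp)).image (List.cons false)
  | N + 1, r + 1, y, l =>
      (MB Lp P N (r + 1) ((l.take Lp).getLastD y) (l.drop Lp)).image (List.cons false) ∪
      (if P y (l.take Lp) then
        (MB Lp P N r ((l.take Lp).getLastD y) (l.drop Lp)).image (List.cons true) else ∅)

theorem MB_cases {V : Type*} (Lp : ℕ) (P : V → List V → Prop) (N r : ℕ) (y : V) (l : List V)
    (bs : List Bool) (h : bs ∈ MB Lp P (N + 1) r y l) :
    (∃ bs', bs = false :: bs' ∧ bs' ∈ MB Lp P N r ((l.take Lp).getLastD y) (l.drop Lp)) ∨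
    (∃ bs' r', bs = true :: bs' ∧ r = r' + 1 ∧ P y (l.take Lp) ∧
      bs' ∈ MB Lp P N r' ((l.take Lp).getLastD y) (l.drop Lp)) := by
  cases r with
  | zero =>
    rw [MB, Finset.mem_image] at h
    obtain ⟨bs', h1, h2⟩ := h
    exact Or.inl ⟨bs', h2.symm, h1⟩
  | succ r =>
    rw [MB, Finset.mem_union, Finset.mem_image] at h
    rcases h with ⟨bs', h1, h2⟩ | h
    · exact Or.inl ⟨bs', h2.symm, h1⟩
    · by_cases hp : P y (l.take Lp)
      · rw [if_pos hp, Finset.mem_image] at h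
        obtain ⟨bs', h1, h2⟩ := h
        exact Or.inr ⟨bs', r, h2.symm, rfl, hp, h1⟩
      · rw [if_neg hp] at h; simp at h

theorem MB_card {V : Type*} (Lp : ℕ) (P : V → List V → Prop) (N r : ℕ) (y : V) (l : List V) :
    (MB Lp P N r y l).card = (gc Lp P N y l).choose r := by
  induction N generalizing r y l with
  | zero =>
    cases r with
    | zero => simp [MB, gc]
    | succ r => simp [MB, gc]
  | succ N ih =>
    have hi : ∀ b : Bool, Function.Injective (List.cons b) := fun b a c h => by simpa using h
    cases r with
    | zero => rw [MB, Finset.card_image_of_injective _ (hi _), ih]; simp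
    | succ r =>
      rw [MB, Finset.card_union_of_disjoint, Finset.card_image_of_injective _ (hi _), ih, gc]
      · by_cases hp : P y (l.take Lp)
        · rw [if_pos hp, if_pos hp, Finset.card_image_of_injective _ (hi _), ih,
            Nat.add_comm 1, Nat.choose_succ_succ]; ring
        · rw [if_neg hp, if_neg hp]; simp
      · rw [Finset.disjoint_left]
        intro bs h1 h2
        rw [Finset.mem_image] at h1
        obtain ⟨b1, _, rfl⟩ := h1
        by_cases hp : P y (l.take Lp)
        · rw [if_pos hp, Finset.mem_image] at h2
          obtain ⟨b2, _, h⟩ := h2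
          simp at h
        · rw [if_neg hp] at h2; simp at h2

def out {V : Type*} (Lp : ℕ) (T : V → List V → List V) : List Bool → V → List V → List V
  | [], _, _ => []
  | b :: bs, y, l => (if b then T y (l.take Lp) else l.take Lp) ++
      out Lp T bs ((l.take Lp).getLastD y) (l.drop Lp)

theorem SF_split {V : Type*} {G : SimpleGraph V} {hG : LF G} {Lp N : ℕ} {y : V} {l : List V}
    (hl : l ∈ SF hG y ((N + 1) * Lp)) : l.take Lp ∈ SF hG y Lp ∧
      l.drop Lp ∈ SF hG ((l.take Lp).getLastD y) (N * Lp) := by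
  have e : (N + 1) * Lp = Lp + N * Lp := by ring
  rw [mem_SF, e] at hl
  rw [mem_SF, mem_SF]
  exact ⟨⟨(saw_take hl.1 Lp).1, by rw [List.length_take]; omega⟩, (saw_take hl.1 Lp).2.1,
    by rw [List.length_drop]; omega⟩

theorem out_length {V : Type*} {G : SimpleGraph V} (hG : LF G) (Lp pad : ℕ)
    (P : V → List V → Prop) (T : V → List V → List V)
    (hT : ∀ y c, P y c → c ∈ SF hG y Lp → (T y c).length ≤ Lp + pad)
    (N r : ℕ) (y : V) (l : List V) (bs : List Bool)
    (hl : l ∈ SF hG y (N * Lp)) (hb : bs ∈ MB Lp P N r y l) :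
    N * Lp ≤ (out Lp T bs y l).length + r * Lp ∧ (out Lp T bs y l).length ≤ N * Lp + r * pad := by
  induction N generalizing r y l bs with
  | zero =>
    cases r with
    | zero => simp [MB] at hb; subst hb; simp [out]
    | succ r => simp [MB] at hb
  | succ N ih =>
    obtain ⟨h1, h2⟩ := SF_split hl
    have hlen := (mem_SF.1 h1).2
    have e : (N + 1) * Lp = Lp + N * Lp := by ring
    rcases MB_cases _ _ _ _ _ _ _ hb with ⟨bs', rfl, hb'⟩ | ⟨bs', r', rfl, rfl, hP, hb'⟩
    · obtain ⟨h3, h4⟩ := ih _ _ _ _ h2 hb'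
      rw [e]
      simp only [out, List.length_append, Bool.false_eq_true, if_false, hlen]
      omega
    · obtain ⟨h3, h4⟩ := ih _ _ _ _ h2 hb'
      have h5 := hT _ _ hP h1
      rw [e, add_mul, add_mul]
      simp only [out, List.length_append, if_true]
      omega

theorem fiber_bound {V : Type*} {G : SimpleGraph V} (hG : LF G) (Lp s : ℕ)
    (P : V → List V → Prop) (T : V → List V → List V)
    (hT : ∀ y c, P y c → c ∈ SF hG y Lp → ¬ (y :: (T y c).take Lp).IsChain G.Adj)
    (hs1 : 1 ≤ s) (hs : ∀ y, (SF hG y Lp).card ≤ s)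
    (N r : ℕ) (y : V) (Q : List V) (D : Finset (List V × List Bool))
    (hD : ∀ p ∈ D, p.1 ∈ SF hG y (N * Lp) ∧ p.2 ∈ MB Lp P N r y p.1 ∧ out Lp T p.2 y p.1 = Q) :
    D.card ≤ s ^ r := by
  induction N generalizing r y Q D with
  | zero =>
    have h1 : D ⊆ {([], [])} := by
      rintro ⟨l, bs⟩ hp
      obtain ⟨h1, h2, -⟩ := hD _ hp
      simp only [Nat.zero_mul, SF_zero, Finset.mem_singleton] at h1
      subst h1
      cases r with
      | zero => simp [MB] at h2; subst h2; simp
      | succ r => simp [MB] at h2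
    exact (Finset.card_le_card h1).trans (by simpa using Nat.one_le_pow _ _ hs1)
  | succ N ih =>
    have hmk : ∀ l ∈ SF hG y ((N + 1) * Lp), ∀ bs', P y (l.take Lp) →
        ¬ (y :: (out Lp T (true :: bs') y l).take Lp).IsChain G.Adj := by
      intro l hl bs' hP hch
      simp only [out, if_true, List.take_append] at hch
      rw [chain_app] at hch
      exact hT _ _ hP (SF_split hl).1 hch.1
    have hum : ∀ l ∈ SF hG y ((N + 1) * Lp), ∀ bs',
        (out Lp T (false :: bs') y l).take Lp = l.take Lp ∧
        (out Lp T (false :: bs') y l).drop Lp =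
          out Lp T bs' ((l.take Lp).getLastD y) (l.drop Lp) := by
      intro l hl bs'
      have hlen := (mem_SF.1 (SF_split hl).1).2
      simp only [out, Bool.false_eq_true, if_false]
      constructor
      · rw [List.take_append_of_le_length hlen.ge, List.take_of_length_le hlen.le]
      · rw [List.drop_append_of_le_length hlen.ge, List.drop_of_length_le hlen.le]; simp
    by_cases hch : (y :: Q.take Lp).IsChain G.Adj
    · have hinj : Set.InjOn (fun p : List V × List Bool => (p.1.drop Lp, p.2.tail)) (D : Set _) := by
        rintro ⟨l, bs⟩ hp ⟨l', bs'⟩ hp' heq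
        obtain ⟨h1, h2, h3⟩ := hD _ hp
        obtain ⟨h1', h2', h3'⟩ := hD _ hp'
        simp only [Prod.mk.injEq] at heq
        rcases MB_cases _ _ _ _ _ _ _ h2 with ⟨b, rfl, hb⟩ | ⟨b, r', rfl, rfl, hP, hb⟩
        · rcases MB_cases _ _ _ _ _ _ _ h2' with ⟨b', rfl, hb'⟩ | ⟨b', r', rfl, rfl, hP, hb'⟩
          · have e1 := (hum _ h1 b).1
            have e2 := (hum _ h1' b').1
            rw [h3] at e1
            rw [h3'] at e2
            have : l = l' := by
              rw [← List.take_append_drop Lp l, ← List.take_append_drop Lp l', heq.1, ← e1, ← e2]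
            have h4 : b = b' := heq.2
            rw [this, h4]
          · exact absurd (h3' ▸ hch) (hmk _ h1' _ hP)
        · exact absurd (h3 ▸ hch) (hmk _ h1 _ hP)
      rw [← Finset.card_image_of_injOn hinj]
      refine ih r ((Q.take Lp).getLastD y) (Q.drop Lp) _ ?_
      intro p hp
      rw [Finset.mem_image] at hp
      obtain ⟨⟨l, bs⟩, hp, rfl⟩ := hp
      obtain ⟨h1, h2, h3⟩ := hD _ hp
      rcases MB_cases _ _ _ _ _ _ _ h2 with ⟨b, rfl, hb⟩ | ⟨b, r', rfl, rfl, hP, hb⟩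
      · have e1 := hum _ h1 b
        rw [h3] at e1
        rw [e1.1]
        exact ⟨(SF_split h1).2, hb, e1.2.symm⟩
      · exact absurd (h3 ▸ hch) (hmk _ h1 _ hP)
    · have hmarked : ∀ p ∈ D, ∃ b r', p.2 = true :: b ∧ r = r' + 1 ∧ P y (p.1.take Lp) ∧
          b ∈ MB Lp P N r' ((p.1.take Lp).getLastD y) (p.1.drop Lp) := by
        intro p hp
        obtain ⟨h1, h2, h3⟩ := hD _ hp
        rcases MB_cases _ _ _ _ _ _ _ h2 with ⟨b, hb0, hb⟩ | h
        · exfalso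
          have e1 := (hum _ h1 b).1
          rw [← hb0, h3] at e1
          rw [e1] at hch
          exact hch (mem_SF.1 (SF_split h1).1).1.1
        · exact h
      cases r with
      | zero =>
        have : D = ∅ := by
          rw [Finset.eq_empty_iff_forall_notMem]
          intro p hp
          obtain ⟨b, r', _, h, _⟩ := hmarked p hp
          omega
        rw [this]; simp
      | succ r =>
        have hm : ∀ p ∈ D, p.1.take Lp ∈ SF hG y Lp := fun p hp => (SF_split (hD p hp).1).1
        have := Finset.card_le_mul_card_image_of_maps_to hm (s ^ r) ?_
        · refine this.trans ?_
          rw [pow_succ]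
          exact Nat.mul_le_mul_left _ (hs y)
        · intro c hc
          have hinj : Set.InjOn (fun p : List V × List Bool => (p.1.drop Lp, p.2.tail))
              ((D.filter (fun p => p.1.take Lp = c) : Finset _) : Set _) := by
            rintro ⟨l, bs⟩ hp ⟨l', bs'⟩ hp' heq
            simp only [Finset.coe_filter, Set.mem_ofPred_eq] at hp hp'
            simp only [Prod.mk.injEq] at heq
            obtain ⟨b, r1, hb, -⟩ := hmarked _ hp.1
            obtain ⟨b', r1', hb', -⟩ := hmarked _ hp'.1
            simp only at hb hb'
            subst hb hb'
            have : l = l' := by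
              rw [← List.take_append_drop Lp l, ← List.take_append_drop Lp l', heq.1, hp.2, hp'.2]
            have h4 : b = b' := heq.2
            rw [this, h4]
          rw [← Finset.card_image_of_injOn hinj]
          refine ih r (c.getLastD y) (Q.drop (T y c).length) _ ?_
          intro p hp
          rw [Finset.mem_image] at hp
          obtain ⟨⟨l, bs⟩, hp, rfl⟩ := hp
          rw [Finset.mem_filter] at hp
          obtain ⟨h1, h2, h3⟩ := hD _ hp.1
          obtain ⟨b, r1, hb, hr, hP, hbm⟩ := hmarked _ hp.1
          have : r1 = r := by omega
          subst this
          simp only at hb h3 hbm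
          subst hb
          have hc' : l.take Lp = c := hp.2
          rw [← hc']
          refine ⟨(SF_split h1).2, hbm, ?_⟩
          rw [← h3]
          simp [out]

end Aug

namespace Aug
open Classical

noncomputable def cnt {V : Type*} (G : SimpleGraph V) (R : ℕ) (F : List V) (x : V) : ℕ :=
  (F.toFinset.filter (fun t => near G (2 * R) x t)).card

def NoE {V : Type*} (G : SimpleGraph V) (R k : ℕ) (F : List V) : Prop :=
  ∀ x ∈ F, cnt G R F x < k

theorem out_saw {V : Type*} {G Gbar : SimpleGraph V} (hG : LF G) (hsub : G ≤ Gbar)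
    (L pad R : ℕ) (hpad : 1 ≤ pad)
    (P : V → List V → Prop) (T : V → List V → List V) (F : List V)
    (hC : ∀ y c, P y c → c ∈ SF hG y (L + pad) → (∀ t ∈ y :: c, t ∈ F) →
      ∃ x ∈ y :: c.take L, (∀ t ∈ F, near G (2 * R) x t → t ∈ y :: c.take L) ∧
        IsSaw Gbar y (T y c) ∧ (T y c).getLastD y = c.getLastD y ∧
        ∀ t ∈ T y c, t ∈ c ∨ (t ∉ F ∧ near G R x t))
    (N r : ℕ) (y : V) (l : List V) (bs : List Bool) (hl : l ∈ SF hG y (N * (L + pad)))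
    (hb : bs ∈ MB (L + pad) P N r y l) (hF : ∀ t ∈ y :: l, t ∈ F) :
    IsSaw Gbar y (out (L + pad) T bs y l) ∧
      ∀ t ∈ out (L + pad) T bs y l, t ∈ l ∨ (t ∉ F ∧ ∃ x ∈ y :: l, near G R x t) := by
  induction N generalizing r y l bs with
  | zero =>
    cases r with
    | zero => simp [MB] at hb; subst hb; simp [out, saw_nil]
    | succ r => simp [MB] at hb
  | succ N ih =>
    obtain ⟨h1, h2⟩ := SF_split hl
    have hc := mem_SF.1 h1
    have hst := saw_take (mem_SF.1 hl).1 (L + pad)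
    have hlc : ∀ t, t ∈ l ↔ t ∈ l.take (L + pad) ∨ t ∈ l.drop (L + pad) := fun t => by
      rw [← List.mem_append, List.take_append_drop]
    have hcF : ∀ t ∈ y :: l.take (L + pad), t ∈ F := fun t ht => hF t (by
      rcases List.mem_cons.1 ht with h | h
      · rw [h]; simp
      · exact List.mem_cons_of_mem _ ((hlc t).2 (Or.inl h)))
    have hyl : ∀ t ∈ (l.take (L + pad)).getLastD y :: l.drop (L + pad), t ∈ y :: l := by
      intro t ht
      rcases List.mem_cons.1 ht with h | h
      · have := getLastD_mem y (l.take (L + pad))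
        rw [← h] at this
        rcases List.mem_cons.1 this with h | h
        · rw [h]; simp
        · exact List.mem_cons_of_mem _ ((hlc t).2 (Or.inl h))
      · exact List.mem_cons_of_mem _ ((hlc t).2 (Or.inr h))
    have hdF : ∀ t ∈ (l.take (L + pad)).getLastD y :: l.drop (L + pad), t ∈ F :=
      fun t ht => hF t (hyl t ht)
    rcases MB_cases _ _ _ _ _ _ _ hb with ⟨bs', rfl, hb'⟩ | ⟨bs', r', rfl, rfl, hP, hb'⟩
    · obtain ⟨i1, i2⟩ := ih _ _ _ _ h2 hb' hdF
      simp only [out, Bool.false_eq_true, if_false]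
      rw [saw_app]
      refine ⟨⟨saw_mono hsub hc.1, i1, ?_⟩, ?_⟩
      · intro t ht ht'
        rcases i2 t ht' with h | h
        · exact hst.2.2 t ht h
        · exact h.1 (hcF t ht)
      · intro t ht
        rcases List.mem_append.1 ht with h | h
        · exact Or.inl ((hlc t).2 (Or.inl h))
        · rcases i2 t h with h | ⟨h, x, hx, hn⟩
          · exact Or.inl ((hlc t).2 (Or.inr h))
          · exact Or.inr ⟨h, x, hyl x hx, hn⟩
    · obtain ⟨i1, i2⟩ := ih _ _ _ _ h2 hb' hdF
      obtain ⟨x, hx, hiso, hTs, hTe, hTm⟩ := hC _ _ hP h1 hcF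
      have hct := saw_take hc.1 L
      have hct' : ∀ t, t ∈ y :: (l.take (L + pad)).take L → t ∈ y :: l.take (L + pad) := by
        intro t ht
        rcases List.mem_cons.1 ht with h | h
        · rw [h]; simp
        · exact List.mem_cons_of_mem _ (List.mem_of_mem_take h)
      simp only [out, if_true]
      rw [saw_app, hTe]
      refine ⟨⟨hTs, i1, ?_⟩, ?_⟩
      · intro t ht ht'
        have hcase : t ∈ y :: l.take (L + pad) ∨ (t ∉ F ∧ near G R x t) := by
          rcases List.mem_cons.1 ht with h | h
          · left; rw [h]; simp
          · rcases hTm t h with h | h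
            · exact Or.inl (List.mem_cons_of_mem _ h)
            · exact Or.inr h
        rcases hcase with h | ⟨h, hn⟩
        · rcases i2 t ht' with h' | h'
          · exact hst.2.2 t h h'
          · exact h'.1 (hcF t h)
        · rcases i2 t ht' with h' | ⟨_, x', hx', hn'⟩
          · exact h (hdF t (List.mem_cons_of_mem _ h'))
          · have h22 : near G (2 * R) x x' := by
              have := near_trans hn (near_symm hn')
              exact near_mono (by omega) this
            have h3 := hiso x' (hdF x' hx') h22
            rcases List.mem_cons.1 hx' with h4 | h4
            · have hne : (l.take (L + pad)).drop L ≠ [] := by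
                intro h0
                have := congrArg List.length h0
                rw [List.length_drop, hc.2] at this
                simp at this
                omega
              have h5 : x' ∈ (l.take (L + pad)).drop L := by
                have e : (l.take (L + pad)).getLastD y = ((l.take (L + pad)).drop L).getLastD
                    (((l.take (L + pad)).take L).getLastD y) := by
                  rw [← getLastD_app, List.take_append_drop]
                rw [h4, e]
                exact getLastD_mem' _ _ hne
              exact hct.2.2 x' h3 h5
            · exact hst.2.2 x' (hct' x' h3) h4
      · intro t ht
        rcases List.mem_append.1 ht with h | h
        · rcases hTm t h with h | ⟨h, hn⟩
          · exact Or.inl ((hlc t).2 (Or.inl h))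
          · refine Or.inr ⟨h, x, ?_, hn⟩
            rcases List.mem_cons.1 (hct' x hx) with h6 | h6
            · rw [h6]; simp
            · exact List.mem_cons_of_mem _ ((hlc x).2 (Or.inl h6))
        · rcases i2 t h with h | ⟨h, x, hx, hn⟩
          · exact Or.inl ((hlc t).2 (Or.inr h))
          · exact Or.inr ⟨h, x, hyl x hx, hn⟩

/-- chunk surgery -/
theorem chunk_surgery {V : Type*} {G Gbar : SimpleGraph V} (hG : LF G) (hsub : G ≤ Gbar)
    (L pad R k : ℕ) (F : List V) (hFk : NoE G R (k + 1) F)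
    (y : V) (c T0 : List V) (hc : c ∈ SF hG y (L + pad)) (hcF : ∀ t ∈ y :: c, t ∈ F)
    (x : V) (hx : x ∈ y :: c.take L) (hk : k ≤ cnt G R (y :: c.take L) x)
    (hT0 : IsSaw Gbar y T0) (hT0e : T0.getLastD y = (c.take L).getLastD y)
    (hT0m : ∀ t ∈ T0, t ∈ y :: c.take L ∨ near G R x t) :
    (∀ t ∈ F, near G (2 * R) x t → t ∈ y :: c.take L) ∧
        IsSaw Gbar y (T0 ++ c.drop L) ∧ (T0 ++ c.drop L).getLastD y = c.getLastD y ∧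
        ∀ t ∈ T0 ++ c.drop L, t ∈ c ∨ (t ∉ F ∧ near G R x t) := by
  have hc1 := mem_SF.1 hc
  have hct := saw_take hc1.1 L
  have hct' : ∀ t, t ∈ y :: c.take L → t ∈ y :: c := by
    intro t ht
    rcases List.mem_cons.1 ht with h | h
    · rw [h]; simp
    · exact List.mem_cons_of_mem _ (List.mem_of_mem_take h)
  have hiso : ∀ t ∈ F, near G (2 * R) x t → t ∈ y :: c.take L := by
    have hle := hFk x (hcF x (hct' x hx))
    have hss : (y :: c.take L).toFinset.filter (fun t => near G (2 * R) x t) ⊆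
        F.toFinset.filter (fun t => near G (2 * R) x t) := by
      intro t ht
      rw [Finset.mem_filter, List.mem_toFinset] at ht ⊢
      exact ⟨hcF t (hct' t ht.1), ht.2⟩
    have heq := Finset.eq_of_subset_of_card_le hss (by unfold cnt at hle hk; omega)
    intro t ht hn
    have : t ∈ F.toFinset.filter (fun t => near G (2 * R) x t) := by
      rw [Finset.mem_filter, List.mem_toFinset]; exact ⟨ht, hn⟩
    rw [← heq, Finset.mem_filter, List.mem_toFinset] at this
    exact this.1
  have hin : ∀ t ∈ y :: T0, t ∈ F → t ∈ y :: c.take L := by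
    intro t ht htF
    rcases List.mem_cons.1 ht with h | h
    · rw [h]; simp
    · rcases hT0m t h with h | h
      · exact h
      · exact hiso t htF (near_mono (by omega) h)
  refine ⟨hiso, ?_, ?_, ?_⟩
  · rw [saw_app, hT0e]
    refine ⟨hT0, saw_mono hsub hct.2.1, fun t ht ht' => ?_⟩
    exact hct.2.2 t (hin t ht (hcF t (List.mem_cons_of_mem _ (List.mem_of_mem_drop ht')))) ht'
  · rw [getLastD_app, hT0e, ← getLastD_app, List.take_append_drop]
  · intro t ht
    rcases List.mem_append.1 ht with h | h
    · by_cases htF : t ∈ F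
      · left
        have h1 := hct' t (hin t (List.mem_cons_of_mem _ h) htF)
        rcases List.mem_cons.1 h1 with h2 | h2
        · exfalso
          rw [h2] at h
          exact (List.nodup_cons.1 hT0.2).1 h
        · exact h2
      · right
        refine ⟨htF, ?_⟩
        rcases hT0m t h with h | h
        · exact absurd (hcF t (hct' t h)) htF
        · exact h
    · exact Or.inl (List.mem_of_mem_drop h)

end Aug

namespace Aug
open Classical

theorem choose_ge (K r : ℕ) (hK : 1 ≤ K) : K ^ r ≤ (K * r).choose r := by
  induction r with
  | zero => simp
  | succ r ih =>
    obtain ⟨K, rfl⟩ : ∃ k, K = k + 1 := ⟨K - 1, by omega⟩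
    have e : (K + 1) * (r + 1) = ((K + 1) * r + K) + 1 := by ring
    have h := Nat.add_one_mul_choose_eq ((K + 1) * r + K) r
    have h2 : ((K + 1) * r).choose r ≤ ((K + 1) * r + K).choose r :=
      Nat.choose_le_choose _ (by omega)
    rw [e]
    have h3 : (K + 1) * ((K + 1) * r + K).choose r = ((K + 1) * r + K + 1).choose (r + 1) := by
      apply Nat.eq_of_mul_eq_mul_right (Nat.succ_pos r)
      simp only [Nat.succ_eq_add_one]
      rw [← h]
      ring
    rw [← h3, pow_succ, mul_comm]
    exact Nat.mul_le_mul_left _ (ih.trans h2)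

theorem surgery_count {V : Type*} {G Gbar : SimpleGraph V} (hG : LF G) (hB : LF Gbar)
    (hsub : G ≤ Gbar) (Δ : ℕ) (hΔ1 : 1 ≤ Δ) (hΔ : ∀ v, (Gbar.neighborSet v).ncard ≤ Δ)
    (L pad R k s : ℕ) (hpad : 1 ≤ pad) (hs1 : 1 ≤ s) (hs : ∀ y, (SF hG y (L + pad)).card ≤ s)
    (P : V → List V → Prop) (T0 : V → List V → List V) (X : V → List V → V)
    (hT : ∀ y c, P y c → c ∈ SF hG y (L + pad) →
      X y c ∈ y :: c.take L ∧ k ≤ cnt G R (y :: c.take L) (X y c) ∧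
      IsSaw Gbar y (T0 y c) ∧ (T0 y c).getLastD y = (c.take L).getLastD y ∧
      (∀ t ∈ T0 y c, t ∈ y :: c.take L ∨ near G R (X y c) t) ∧
      ¬ (y :: T0 y c).IsChain G.Adj ∧ (T0 y c).length ≤ L + pad)
    (N r M : ℕ) (hNr : r ≤ N) (v : V) (XX : Finset (List V))
    (hX : ∀ l ∈ XX, l ∈ SF hG v (N * (L + pad)) ∧ NoE G R (k + 1) (v :: l) ∧
      M ≤ gc (L + pad) P N v l) :
    XX.card * M.choose r ≤ s ^ r * ((2 * Δ) ^ (r * (L + pad + pad)) *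
      (SF hB v ((N - r) * (L + pad))).card) := by
  set T : V → List V → List V := fun y c => T0 y c ++ c.drop L with hTdef
  set D : Finset (List V × List Bool) :=
    XX.biUnion (fun l => (MB (L + pad) P N r v l).image (Prod.mk l)) with hDdef
  have hDm : ∀ p ∈ D, p.1 ∈ XX ∧ p.2 ∈ MB (L + pad) P N r v p.1 := by
    intro p hp
    rw [hDdef, Finset.mem_biUnion] at hp
    obtain ⟨l, hl, hp⟩ := hp
    rw [Finset.mem_image] at hp
    obtain ⟨b, hb, rfl⟩ := hp
    exact ⟨hl, hb⟩
  have hDc : XX.card * M.choose r ≤ D.card := by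
    rw [hDdef, Finset.card_biUnion]
    · rw [← smul_eq_mul]
      refine Finset.card_nsmul_le_sum _ _ _ fun l hl => ?_
      rw [Finset.card_image_of_injective _ (fun a b h => by simpa using h), MB_card]
      exact Nat.choose_le_choose _ (hX l hl).2.2
    · intro a _ b _ hab
      rw [Function.onFun, Finset.disjoint_left]
      intro p h1 h2
      rw [Finset.mem_image] at h1 h2
      obtain ⟨b1, _, rfl⟩ := h1
      obtain ⟨b2, _, h⟩ := h2
      exact hab (Prod.mk.inj h).1.symm
  set n0 := (N - r) * (L + pad) with hn0
  set m := r * (L + pad + pad) with hm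
  have hTlen : ∀ y c, P y c → c ∈ SF hG y (L + pad) → (T y c).length ≤ L + pad + pad := by
    intro y c hP hc
    have h1 := (hT y c hP hc).2.2.2.2.2.2
    have h2 := (mem_SF.1 hc).2
    simp only [hTdef, List.length_append, List.length_drop]
    omega
  have hTch : ∀ y c, P y c → c ∈ SF hG y (L + pad) →
      ¬ (y :: (T y c).take (L + pad)).IsChain G.Adj := by
    intro y c hP hc hch
    obtain ⟨_, _, _, _, _, h1, h2⟩ := hT y c hP hc
    simp only [hTdef, List.take_append, List.take_of_length_le h2] at hch
    rw [chain_app] at hch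
    exact h1 hch.1
  set tt : Finset (List V) := (Finset.range (m + 1)).biUnion (fun j => SF hB v (n0 + j)) with htt
  have hmaps : ∀ p ∈ D, out (L + pad) T p.2 v p.1 ∈ tt := by
    intro p hp
    obtain ⟨h1, h2⟩ := hDm p hp
    obtain ⟨h3, h4, h5⟩ := hX _ h1
    obtain ⟨h6, h7⟩ := out_length hG (L + pad) pad P T hTlen N r v p.1 p.2 h3 h2
    have h8 := (out_saw hG hsub L pad R hpad P T (v :: p.1) (fun y c hP hc hcF => by
      obtain ⟨a1, a2, a3, a4, a5, a6, a7⟩ := hT y c hP hc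
      exact ⟨X y c, a1, chunk_surgery hG hsub L pad R k (v :: p.1) h4 y c (T0 y c) hc hcF
        (X y c) a1 a2 a3 a4 a5⟩) N r v p.1 p.2 h3 h2 (fun t ht => ht)).1
    rw [htt, Finset.mem_biUnion]
    have e1 : N * (L + pad) = n0 + r * (L + pad) := by
      rw [hn0, ← add_mul]; congr 1; omega
    have e2 : m = r * (L + pad) + r * pad := by rw [hm]; ring
    refine ⟨(out (L + pad) T p.2 v p.1).length - n0, ?_, ?_⟩
    · rw [Finset.mem_range]; omega
    · rw [mem_SF]; exact ⟨h8, by omega⟩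
  have hfib : ∀ Q ∈ tt, (D.filter (fun p => out (L + pad) T p.2 v p.1 = Q)).card ≤ s ^ r := by
    intro Q _
    refine fiber_bound hG (L + pad) s P T hTch hs1 hs N r v Q _ ?_
    intro p hp
    rw [Finset.mem_filter] at hp
    obtain ⟨h1, h2⟩ := hDm p hp.1
    exact ⟨(hX _ h1).1, h2, hp.2⟩
  have h1 := Finset.card_le_mul_card_image_of_maps_to hmaps _ hfib
  refine hDc.trans (h1.trans (Nat.mul_le_mul_left _ ?_))
  calc tt.card ≤ ∑ j ∈ Finset.range (m + 1), (SF hB v (n0 + j)).card := Finset.card_biUnion_le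
    _ ≤ ∑ j ∈ Finset.range (m + 1), Δ ^ m * (SF hB v n0).card := by
        refine Finset.sum_le_sum fun j hj => ?_
        rw [Finset.mem_range] at hj
        refine (sg_mono_deg hB Δ hΔ v n0 j).trans (Nat.mul_le_mul_right _ ?_)
        exact Nat.pow_le_pow_right hΔ1 (by omega)
    _ = (m + 1) * (Δ ^ m * (SF hB v n0).card) := by
        rw [Finset.sum_const, Finset.card_range, smul_eq_mul]
    _ ≤ 2 ^ m * (Δ ^ m * (SF hB v n0).card) := Nat.mul_le_mul_right _ Nat.lt_two_pow_self
    _ = _ := by rw [mul_pow]; ring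

end Aug

namespace Aug
open Classical

theorem finish {σ : ℕ → ℝ} (Δ μ C : ℝ) (q r0 : ℕ) (hΔ : 1 ≤ Δ) (hμ : 1 ≤ μ) (hC : 0 < C)
    (hq : 1 ≤ q) (hmono : ∀ m n, σ (m + n) ≤ Δ ^ n * σ m) (hσ : ∀ n, 0 ≤ σ n)
    (h : ∀ r, r0 ≤ r → C * (2 * μ ^ q) ^ r ≤ σ (q * r)) :
    ∃ lam c : ℝ, μ < lam ∧ 0 < c ∧ ∀ n, c * lam ^ n ≤ σ n := by
  obtain ⟨lam, hl0, hl⟩ : ∃ lam : ℝ, 0 ≤ lam ∧ lam ^ q = 2 * μ ^ q :=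
    ⟨(2 * μ ^ q) ^ ((q : ℝ)⁻¹), by positivity, Real.rpow_inv_natCast_pow (by positivity) (by omega)⟩
  have hμq : (1:ℝ) ≤ μ ^ q := one_le_pow₀ hμ
  have hlt : μ < lam := by
    by_contra hcon
    push Not at hcon
    have := pow_le_pow_left₀ hl0 hcon q
    linarith
  have hD : 0 < Δ ^ (q * (1 + r0)) := by positivity
  refine ⟨lam, C / Δ ^ (q * (1 + r0)), hlt, by positivity, fun n => ?_⟩
  have hr := h (n / q + 1 + r0) (Nat.le_add_left _ _)
  have e : q * (n / q + 1 + r0) = q * (n / q) + q * (1 + r0) := by ring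
  have e2 := Nat.div_add_mod n q
  have e3 := Nat.mod_lt n (show q > 0 by omega)
  have e4 : q ≤ q * (1 + r0) := Nat.le_mul_of_pos_right _ (by omega)
  set d := q * (n / q + 1 + r0) - n with hd
  have hd1 : q * (n / q + 1 + r0) = n + d := by omega
  have hd2 : d ≤ q * (1 + r0) := by omega
  rw [← hl, ← pow_mul, hd1] at hr
  have h1 := hmono n d
  have h2 : lam ^ n ≤ lam ^ (n + d) := pow_le_pow_right₀ (by linarith) (by omega)
  have h3 : Δ ^ d ≤ Δ ^ (q * (1 + r0)) := pow_le_pow_right₀ hΔ hd2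
  rw [div_mul_eq_mul_div, div_le_iff₀ hD]
  calc C * lam ^ n ≤ C * lam ^ (n + d) := by gcongr
    _ ≤ σ (n + d) := hr
    _ ≤ Δ ^ d * σ n := h1
    _ ≤ Δ ^ (q * (1 + r0)) * σ n := by have := hσ n; gcongr
    _ = _ := by ring

theorem cnt_map {V : Type*} {G : SimpleGraph V} (γ : G ≃g G) (R : ℕ) (F : List V) (x : V) :
    cnt G R (F.map γ) (γ x) = cnt G R F x := by
  unfold cnt
  rw [← Finset.card_image_of_injective (f := γ)
    (F.toFinset.filter (fun t => near G (2 * R) x t)) γ.injective]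
  congr 1
  ext t
  simp only [Finset.mem_filter, List.mem_toFinset, List.mem_map, Finset.mem_image]
  constructor
  · rintro ⟨⟨s, hs, rfl⟩, h⟩
    exact ⟨s, ⟨hs, (near_map γ).1 h⟩, rfl⟩
  · rintro ⟨s, ⟨hs, h⟩, rfl⟩
    exact ⟨⟨s, hs, rfl⟩, (near_map γ).2 h⟩

theorem NoE_map {V : Type*} {G : SimpleGraph V} (γ : G ≃g G) (R k : ℕ) (F : List V) :
    NoE G R k (F.map γ) ↔ NoE G R k F := by
  unfold NoE
  constructor
  · intro h x hx
    rw [← cnt_map γ]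
    exact h _ (List.mem_map_of_mem hx)
  · intro h x hx
    obtain ⟨z, hz, rfl⟩ := List.mem_map.1 hx
    rw [cnt_map]
    exact h z hz

noncomputable def BB {V : Type*} {G : SimpleGraph V} (hG : LF G) (R k : ℕ) (v : V) (L : ℕ) : ℕ :=
  ((SF hG v L).filter (fun l => NoE G R k (v :: l))).card

theorem BB_const {V : Type*} {G : SimpleGraph V} (hG : LF G)
    (hvt : ∀ u w : V, ∃ γ : G ≃g G, γ u = w) (R k : ℕ) (v y : V) (L : ℕ) :
    BB hG R k v L = BB hG R k y L := by
  obtain ⟨γ, rfl⟩ := hvt v y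
  unfold BB
  refine card_iso hG γ v L _ _ fun l => ?_
  rw [← List.map_cons, NoE_map]

theorem kesten {V : Type*} {G : SimpleGraph V} [Infinite V] (hG : LF G) 
    (hvt : ∀ u w : V, ∃ γ : G ≃g G, γ u = w) (R : ℕ) (μ : ℝ) (hμ1 : 1 ≤ μ)
    (hμ : ∀ x n, μ ^ n ≤ ((SF hG x n).card : ℝ)) (v : V) (S : ℝ) :
    ∃ k L : ℕ, 1 ≤ L ∧ (BB hG R k v L : ℝ) * S < μ ^ L ∧
      ∃ c0 : ℝ, 0 < c0 ∧ ∀ L', 1 ≤ L' → μ ^ L' ≤ (BB hG R (k + 1) v L' : ℝ) * c0 := by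
  let Good : ℕ → Prop := fun k => ∀ c0 : ℝ, ∃ L, 1 ≤ L ∧ (BB hG R k v L : ℝ) * c0 < μ ^ L
  have g1 : Good 1 := by
    intro c0
    refine ⟨1, le_rfl, ?_⟩
    have : BB hG R 1 v 1 = 0 := by
      unfold BB
      rw [Finset.card_eq_zero, Finset.filter_eq_empty_iff]
      intro l _ h
      have h1 := h v (by simp)
      unfold cnt at h1
      rw [Nat.lt_one_iff, Finset.card_eq_zero, Finset.filter_eq_empty_iff] at h1
      exact h1 (x := v) (by simp) (near_refl _ _)
    rw [this]
    simp
    linarith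
  have gb : ¬ Good ((BF hG (2 * R) v).card + 1) := by
    intro h
    obtain ⟨L, _, hL⟩ := h 1
    have : BB hG R ((BF hG (2 * R) v).card + 1) v L = (SF hG v L).card := by
      unfold BB
      congr 1
      rw [Finset.filter_eq_self]
      intro l _ x _
      rw [BF_const hG hvt (2 * R) v x]
      unfold cnt
      refine Nat.lt_succ_of_le (Finset.card_le_card ?_)
      intro t ht
      rw [Finset.mem_filter] at ht
      rw [mem_BF]
      exact ht.2
    rw [this, mul_one] at hL
    exact absurd (hμ v L) (not_le.2 hL)
  obtain ⟨k, hk, hk1⟩ : ∃ k, Good k ∧ ¬ Good (k + 1) := by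
    by_contra hcon
    push Not at hcon
    have : ∀ j, Good (j + 1) := by
      intro j
      induction j with
      | zero => exact g1
      | succ j ih => exact hcon _ ih
    exact gb (this _)
  obtain ⟨L, hL1, hL⟩ := hk S
  refine ⟨k, L, hL1, hL, ?_⟩
  simp only [Good] at hk1
  push Not at hk1
  obtain ⟨c0, hc0⟩ := hk1
  refine ⟨c0, ?_, hc0⟩
  by_contra hneg
  push Not at hneg
  have h1 := hc0 1 le_rfl
  have h2 : (0:ℝ) ≤ BB hG R (k + 1) v 1 := by positivity
  have h3 : (BB hG R (k + 1) v 1 : ℝ) * c0 ≤ 0 := mul_nonpos_of_nonneg_of_nonpos h2 hneg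
  rw [pow_one] at h1
  linarith

def PP {V : Type*} (G : SimpleGraph V) (R k L : ℕ) (y : V) (c : List V) : Prop :=
  ¬ NoE G R k (y :: c.take L)

theorem bad_bound {V : Type*} {G : SimpleGraph V} (hG : LF G)
    (hvt : ∀ u w : V, ∃ γ : G ≃g G, γ u = w) (R k L pad : ℕ) (v y : V) :
    (((SF hG y (L + pad)).filter (fun c => ¬ PP G R k L y c)).card : ℝ) ≤
      (BB hG R k v L : ℝ) * (SF hG v pad).card := by
  have h := sum_split hG y L pad (fun c => if NoE G R k (y :: c) then 1 else 0) (fun _ _ => 1)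
    (fun c => by split_ifs <;> norm_num) (fun _ _ => by norm_num)
  simp only [Finset.sum_const, nsmul_eq_mul, mul_one] at h
  have e : ∀ c : List V, (¬ PP G R k L y c) ↔ NoE G R k (y :: c.take L) := fun c => by
    unfold PP; exact not_not
  simp only [e]
  rw [Finset.sum_boole] at h
  refine h.trans ?_
  rw [BB_const hG hvt R k v y L]
  unfold BB
  rw [← Finset.sum_boole, Finset.sum_mul]
  refine Finset.sum_le_sum fun c _ => ?_
  rw [sg_const hG hvt (c.getLastD y) v pad]

end Aug

namespace Aug
open Classical

theorem two_conn_case {V : Type*} {G Gbar : SimpleGraph V} [Infinite V] (hG : LF G)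
    (hc : G.Connected) (hB : LF Gbar) (hsub : G ≤ Gbar)
    (hvt : ∀ u w : V, ∃ γ : G ≃g G, γ u = w)
    (h2c : ∀ c a b : V, a ≠ c → b ≠ c → Conn G c a b)
    (D : ℕ) (hD : ∀ v, (Gbar.neighborSet v).ncard ≤ D) (R0 : ℕ) (hR1 : 1 ≤ R0)
    (hR0 : ∀ x, ∃ u w, near G R0 x u ∧ near G R0 x w ∧ Gbar.Adj u w ∧ ¬ G.Adj u w)
    (μ : ℝ) (hμ1 : 1 ≤ μ)
    (hμ : ∀ x n, μ ^ n ≤ ((SF hG x n).card : ℝ)) (v : V) :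
    ∃ lam c : ℝ, μ < lam ∧ 0 < c ∧ ∀ n : ℕ, c * lam ^ n ≤ ((SF hB v n).card : ℝ) := by
  have hμ0 : 0 < μ := by linarith
  obtain ⟨R, hR, hL⟩ := locC_exists hG hc hvt h2c R0
  obtain ⟨Δ, hΔ1, hΔ⟩ : ∃ Δ, 1 ≤ Δ ∧ ∀ v, (Gbar.neighborSet v).ncard ≤ Δ :=
    ⟨D + 1, by omega, fun v => (hD v).trans (by omega)⟩
  obtain ⟨pad, hpadc, hpad⟩ : ∃ pad, (∀ x, (BF hG R x).card = pad) ∧ 1 ≤ pad := by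
    refine ⟨(BF hG R v).card, fun x => BF_const hG hvt R x v, ?_⟩
    exact Finset.card_pos.2 ⟨v, by rw [mem_BF]; exact near_refl _ _⟩
  obtain ⟨k, L, hL1, hbad, c0, hc0, hc0L⟩ := kesten hG hvt R μ hμ1 hμ v (2 * (SF hG v pad).card)
  set Lp := L + pad with hLp
  set P := PP G R k L with hPdef
  set s := (SF hG v Lp).card with hs
  have hs1 : 1 ≤ s := sg_pos hG hc v Lp
  have hsy : ∀ y, (SF hG y Lp).card ≤ s := fun y => (sg_const hG hvt y v Lp).le
  -- local surgery
  have hsurg : ∀ y c, ∃ x T, P y c → c ∈ SF hG y Lp → x ∈ y :: c.take L ∧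
      k ≤ cnt G R (y :: c.take L) x ∧
      IsSaw Gbar y T ∧ T.getLastD y = (c.take L).getLastD y ∧
      (∀ t ∈ T, t ∈ y :: c.take L ∨ near G R x t) ∧
      ¬ (y :: T).IsChain G.Adj ∧ T.length ≤ L + pad := by
    intro y c
    by_cases h : P y c ∧ c ∈ SF hG y Lp
    · obtain ⟨hP, hcc⟩ := h
      rw [mem_SF] at hcc
      simp only [hPdef, PP, NoE] at hP
      push Not at hP
      obtain ⟨x, hx, hk⟩ := hP
      obtain ⟨u, w, hu, hw, hA, hN⟩ := hR0 x
      have hlen : (c.take L).length = L := by rw [List.length_take]; omega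
      have hne : c.take L ≠ [] := by
        intro h0
        rw [h0] at hlen
        simp at hlen
        omega
      obtain ⟨T, t1, t2, t3, t4, t5⟩ := local_surgery hG hsub hR1 hR hL (saw_take hcc.1 L).1 hne hx
        hu hw hA hN
      rw [hlen, hpadc] at t5
      exact ⟨x, T, fun _ _ => ⟨hx, hk, t1, t2, t3, t4, t5⟩⟩
    · exact ⟨y, [], fun h1 h2 => absurd ⟨h1, h2⟩ h⟩
  choose X T0 hT using hsurg
  -- constants
  have hsR : (1:ℝ) ≤ s := by exact_mod_cast hs1
  set t : ℝ := 1 / (4 * s) with ht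
  have ht0 : 0 < t := by positivity
  have ht1 : t ≤ 1 := by
    rw [ht, div_le_one (by positivity)]; linarith
  have hμL : (1:ℝ) ≤ μ ^ Lp := one_le_pow₀ hμ1
  have ha : ∀ y, (((SF hG y Lp).filter (fun c => ¬ P y c)).card : ℝ) ≤ μ ^ Lp / 2 := by
    intro y
    refine (bad_bound hG hvt R k L pad v y).trans ?_
    have : μ ^ L ≤ μ ^ Lp := pow_le_pow_right₀ hμ1 (by omega)
    linarith
  have hq : μ ^ Lp / 2 + t * s ≤ (3 / 4) * μ ^ Lp := by
    have : t * s = 1 / 4 := by rw [ht]; field_simp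
    rw [this]; linarith
  obtain ⟨e, he⟩ := exists_pow_lt_of_lt_one (show (0:ℝ) < t / 2 by positivity)
    (show (3 / 4 : ℝ) < 1 by norm_num)
  have he1 : 1 ≤ e := by
    rcases Nat.eq_zero_or_pos e with h | h
    · rw [h, pow_zero] at he; linarith
    · exact h
  have hfew : ∀ M, (((SF hG v (e * M * Lp)).filter (fun l => gc Lp P (e * M) v l < M)).card : ℝ) ≤
      (1 / 2) ^ M * μ ^ (e * M * Lp) := by
    intro M
    have h := gc_few hG Lp P (μ ^ Lp / 2) s t (3 / 4 * μ ^ Lp) ht0 ht1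
      (fun y => by exact_mod_cast hsy y) ha hq (e * M) M v
    have h2 : (3 / 4 * μ ^ Lp) ^ (e * M) ≤ ((1 / 2) ^ M * μ ^ (e * M * Lp)) * t ^ M := by
      have h3 : ((3 / 4 : ℝ) ^ e) ^ M ≤ (t / 2) ^ M := pow_le_pow_left₀ (by positivity) he.le M
      calc (3 / 4 * μ ^ Lp) ^ (e * M) = ((3 / 4 : ℝ) ^ e) ^ M * μ ^ (e * M * Lp) := by
            rw [mul_pow, ← pow_mul, ← pow_mul, mul_comm Lp]
        _ ≤ (t / 2) ^ M * μ ^ (e * M * Lp) := by gcongr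
        _ = _ := by rw [div_pow, one_div, inv_pow]; ring
    exact le_of_mul_le_mul_right (h.trans h2) (by positivity)
  obtain ⟨M0, hM0⟩ := exists_pow_lt_of_lt_one (show (0:ℝ) < 1 / (2 * c0) by positivity)
    (show (1 / 2 : ℝ) < 1 by norm_num)
  set XX : ℕ → Finset (List V) := fun M => (SF hG v (e * M * Lp)).filter
    (fun l => NoE G R (k + 1) (v :: l) ∧ M ≤ gc Lp P (e * M) v l) with hXX
  have hXXc : ∀ M, 1 ≤ M → M0 ≤ M → 1 / (2 * c0) * μ ^ (e * M * Lp) ≤ ((XX M).card : ℝ) := by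
    intro M hM1 hM
    have h1 := hfew M
    have hpos : 1 ≤ e * M * Lp := by
      have : 0 < e * M * Lp := by positivity
      omega
    have h2 := hc0L (e * M * Lp) hpos
    have h3 : BB hG R (k + 1) v (e * M * Lp) ≤ (XX M).card +
        ((SF hG v (e * M * Lp)).filter (fun l => gc Lp P (e * M) v l < M)).card := by
      unfold BB
      refine le_trans (Finset.card_le_card ?_) (Finset.card_union_le _ _)
      intro l hl
      rw [Finset.mem_filter] at hl
      rw [Finset.mem_union, hXX, Finset.mem_filter, Finset.mem_filter]
      rcases lt_or_ge (gc Lp P (e * M) v l) M with h | h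
      · exact Or.inr ⟨hl.1, h⟩
      · exact Or.inl ⟨hl.1, hl.2, h⟩
    have h3' : (BB hG R (k + 1) v (e * M * Lp) : ℝ) ≤ (XX M).card +
        ((SF hG v (e * M * Lp)).filter (fun l => gc Lp P (e * M) v l < M)).card := by
      exact_mod_cast h3
    have h4 : ((1:ℝ) / 2) ^ M ≤ 1 / (2 * c0) :=
      (pow_le_pow_of_le_one (by norm_num) (by norm_num) hM).trans hM0.le
    have h5 : μ ^ (e * M * Lp) / c0 ≤ (BB hG R (k + 1) v (e * M * Lp) : ℝ) := by
      rw [div_le_iff₀ hc0]; exact h2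
    have h6 : ((1:ℝ) / 2) ^ M * μ ^ (e * M * Lp) ≤ 1 / (2 * c0) * μ ^ (e * M * Lp) := by gcongr
    have h7 : μ ^ (e * M * Lp) / c0 = 1 / (2 * c0) * μ ^ (e * M * Lp) +
        1 / (2 * c0) * μ ^ (e * M * Lp) := by field_simp; ring
    linarith
  set K0 := s * (2 * Δ) ^ (Lp + pad) with hK0
  have hK0p : 1 ≤ K0 := by
    have : 0 < K0 := by positivity
    omega
  have hmain : ∀ r, M0 + 1 ≤ r → 1 / (2 * c0) * (2 * μ ^ ((e * (2 * K0) - 1) * Lp)) ^ r ≤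
      ((SF hB v ((e * (2 * K0) - 1) * Lp * r)).card : ℝ) := by
    intro r hr
    have hMr : r ≤ 2 * K0 * r := Nat.le_mul_of_pos_left _ (by omega)
    have hNr : r ≤ e * (2 * K0 * r) := hMr.trans (Nat.le_mul_of_pos_left _ (by omega))
    have h1 := surgery_count hG hB hsub Δ hΔ1 hΔ L pad R k s hpad hs1 hsy P T0 X hT
      (e * (2 * K0 * r)) r (2 * K0 * r) hNr v (XX (2 * K0 * r)) (by
        intro l hl
        rw [hXX, Finset.mem_filter] at hl
        exact ⟨hl.1, hl.2.1, hl.2.2⟩)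
    rw [← hLp] at h1
    have hn0 : (e * (2 * K0 * r) - r) * Lp = (e * (2 * K0) - 1) * Lp * r := by
      have : e * (2 * K0 * r) - r = (e * (2 * K0) - 1) * r := by
        rw [Nat.sub_mul]; congr 1 <;> ring
      rw [this]; ring
    rw [hn0] at h1
    set q := (e * (2 * K0) - 1) * Lp with hqd
    have h2 := choose_ge (2 * K0) r (by omega)
    have h3 : (XX (2 * K0 * r)).card * 2 ^ r ≤ (SF hB v (q * r)).card := by
      have h4 : K0 ^ r * ((XX (2 * K0 * r)).card * 2 ^ r) ≤ K0 ^ r * (SF hB v (q * r)).card := by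
        calc K0 ^ r * ((XX (2 * K0 * r)).card * 2 ^ r)
            = (XX (2 * K0 * r)).card * (2 * K0) ^ r := by rw [mul_pow]; ring
          _ ≤ (XX (2 * K0 * r)).card * (2 * K0 * r).choose r := Nat.mul_le_mul_left _ h2
          _ ≤ _ := h1
          _ = K0 ^ r * (SF hB v (q * r)).card := by
            rw [hK0, mul_pow s, ← pow_mul, mul_comm r]; ring
      exact Nat.le_of_mul_le_mul_left h4 (by positivity)
    have h3' : ((XX (2 * K0 * r)).card : ℝ) * 2 ^ r ≤ (SF hB v (q * r)).card := by
      exact_mod_cast h3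
    have h5 := hXXc (2 * K0 * r) (by omega) (by omega)
    have h6 : μ ^ (q * r) ≤ μ ^ (e * (2 * K0 * r) * Lp) := by
      apply pow_le_pow_right₀ hμ1
      rw [← hn0]
      exact Nat.mul_le_mul_right _ (Nat.sub_le _ _)
    calc 1 / (2 * c0) * (2 * μ ^ q) ^ r = (1 / (2 * c0) * μ ^ (q * r)) * 2 ^ r := by
          rw [mul_pow, ← pow_mul]; ring
      _ ≤ (1 / (2 * c0) * μ ^ (e * (2 * K0 * r) * Lp)) * 2 ^ r := by gcongr
      _ ≤ ((XX (2 * K0 * r)).card : ℝ) * 2 ^ r := by gcongr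
      _ ≤ _ := h3'
  have hq1 : 1 ≤ (e * (2 * K0) - 1) * Lp := by
    have h1 : 2 * K0 ≤ e * (2 * K0) := Nat.le_mul_of_pos_left _ (by omega)
    have : 0 < (e * (2 * K0) - 1) * Lp := Nat.mul_pos (by omega) (by omega)
    omega
  exact finish (σ := fun n => ((SF hB v n).card : ℝ)) Δ μ (1 / (2 * c0)) _ (M0 + 1)
    (by exact_mod_cast hΔ1) hμ1 (by positivity) hq1
    (fun m n => by exact_mod_cast sg_mono_deg hB Δ hΔ v m n) (fun n => by positivity) hmain

end Aug

/-- Strict inequality for quasi-transitive augmentation: if `Ḡ` is obtained from the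
infinite, connected, locally finite, vertex-transitive graph `G` by adding at least one
new edge, and some subgroup `𝒜` of a transitively acting automorphism group `Γ` of `G`
has the finite coset property and consists of automorphisms of `Ḡ`, then the connective
constant strictly increases. -/
theorem augmentation_strict_inequality {V : Type*} (G Gbar : SimpleGraph V) [Infinite V]
    (hconn : G.Connected)
    (hlf : ∀ v : V, (G.neighborSet v).Finite)
    (hlfbar : ∀ v : V, (Gbar.neighborSet v).Finite)
    (hvt : ∀ u w : V, ∃ γ : G ≃g G, γ u = w)
    (hsub : G ≤ Gbar)
    (hproper : ∃ u w : V, Gbar.Adj u w ∧ ¬ G.Adj u w)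
    (Γ A : Subgroup (Equiv.Perm V))
    (hΓaut : ∀ γ ∈ Γ, ∀ u w : V, G.Adj (γ u) (γ w) ↔ G.Adj u w)
    (hΓtrans : ∀ u w : V, ∃ γ ∈ Γ, γ u = w)
    (hAΓ : A ≤ Γ)
    (hfcp : ∃ ρ : V, FiniteCosetProperty Γ A ρ)
    (hAbar : ∀ α ∈ A, ∀ u w : V, Gbar.Adj (α u) (α w) ↔ Gbar.Adj u w)
    (v : V) (μ : ℝ)
    (hμ : Tendsto (fun n : ℕ => (sawCount G v n : ℝ) ^ ((1 : ℝ) / n)) atTop (nhds μ)) :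
    μ < liminf (fun n : ℕ => (sawCount Gbar v n : ℝ) ^ ((1 : ℝ) / n)) atTop := by
  have hG : Aug.LF G := hlf
  have hB : Aug.LF Gbar := hlfbar
  simp only [Aug.sawCount_eq hG] at hμ
  simp only [Aug.sawCount_eq hB]
  obtain ⟨hμ1, hμn⟩ := Aug.mu_facts hG hconn hvt v μ hμ
  obtain ⟨ρ, hf⟩ := hfcp
  obtain ⟨r0, hr0⟩ := Aug.cofinite_orbit hconn Γ A hΓaut hAΓ ρ hf
  obtain ⟨⟨Δ, hΔ⟩, R0, hR1, hR0⟩ := Aug.augment_facts hG hB hconn hproper A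
    (fun α hα => hΓaut α (hAΓ hα)) hAbar ρ r0 hr0
  have key : ∃ lam c : ℝ, μ < lam ∧ 0 < c ∧ ∀ n : ℕ, c * lam ^ n ≤
      ((Aug.SF hB v n).card : ℝ) := by
    by_cases hcut : ∃ c a b : V, a ≠ c ∧ b ≠ c ∧ ¬ Aug.Conn G c a b
    · exact Aug.cut_case hG hconn hB hsub hvt hcut R0 hR0 μ hμ1 hμn v
    · push Not at hcut
      exact Aug.two_conn_case hG hconn hB hsub hvt hcut Δ hΔ R0 hR1 hR0 μ hμ1 hμn v
  obtain ⟨lam, c, h1, h2, h3⟩ := key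
  exact Aug.final_step hB Δ hΔ v μ lam c hμ1 h1 h2 h3
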